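/- arXiv:1808.05435 — 3 statements merged into one kernel-verified Lean document; each statement's English description precedes it below -/
import Mathlib

section
/- Let A be a complex semisimple unital Banach algebra such that Soc A is a minimal two-sided ideal and the left annihilator l(Soc A) equals {0}. Then for all a, b ∈ A the following are equivalent: (i) ρ(ax) ≤ ρ(bx) for all x ∈ A; (ii) a = λb for some λ ∈ ℂ with |λ| ≤ 1. -/
open Complex

noncomputable section

/-- The nonzero spectrum `σ'(x) = σ(x) \ {0}` of an element of a complex algebra. -/
def nzSpec {A : Type*} [Ring A] [Algebra ℂ A] (x : A) : Set ℂ :=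
  spectrum ℂ x \ {0}

/-- The spectral rank of an element: `rank a = sup_{x ∈ A} #σ'(xa)`, valued in `ℕ∞`. -/
noncomputable def srank {A : Type*} [Ring A] [Algebra ℂ A] (a : A) : ℕ∞ :=
  ⨆ x : A, (nzSpec (x * a)).encard

/-- The socle of `A`: the set of finite-rank elements. -/
def socle (A : Type*) [Ring A] [Algebra ℂ A] : Set A :=
  {a : A | srank a ≠ ⊤}

/-- `A` is (Jacobson) semisimple: its Jacobson radical is `{0}`. -/
def JacobsonSemisimple (A : Type*) [Ring A] : Prop :=
  TwoSidedIdeal.jacobson (⊥ : TwoSidedIdeal A) = ⊥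

/-- `Soc A` is a minimal two-sided ideal: it is a nonzero two-sided ideal containing
no two-sided ideals other than `{0}` and itself. -/
def SocleIsMinimalTwoSidedIdeal (A : Type*) [Ring A] [Algebra ℂ A] : Prop :=
  ∃ I : TwoSidedIdeal A, (I : Set A) = socle A ∧ I ≠ ⊥ ∧
    ∀ J : TwoSidedIdeal A, J ≤ I → J = ⊥ ∨ J = I

/-- `A` is a prime algebra: all nonzero two-sided ideals `I, J` satisfy `IJ ≠ {0}`. -/
def IsPrimeAlgebra (A : Type*) [Ring A] : Prop :=
  ∀ I J : TwoSidedIdeal A, I ≠ ⊥ → J ≠ ⊥ → ∃ x ∈ I, ∃ y ∈ J, x * y ≠ 0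

/-- The left annihilator of the socle equals `{0}`. -/
def LeftAnnSocleTrivial (A : Type*) [Ring A] [Algebra ℂ A] : Prop :=
  {x : A | ∀ y ∈ socle A, x * y = 0} = {0}

/-!
Semisimplicity gives a maximal left ideal `L` that misses some element of the socle `I`. On the
simple module `M = A ⧸ L` every endomorphism is a scalar, so Jacobson's density theorem says that
`A` realises arbitrary linear maps on finite-dimensional subspaces of `M`. Two consequences follow.

* If `N` is the annihilator of `M`, then `N ⊓ I` is properly contained in the minimal ideal `I`, so
  `N * I = 0` and hence `N = 0`: the module `M` is faithful.
* Linearly independent vectors in the range of `a` can be made eigenvectors of some `x * a` with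
  distinct nonzero eigenvalues. Elements of the socle therefore act on `M` with finite rank, and
  some element of `A` acts with rank one.

If `x` acts by `m ↦ f (z • m) • w`, then `a * x` acts by a rank-one operator and its spectral radius
is `|f (z • a • w)|`. Hence `|f (z • a • w)| ≤ |f (z • b • w)|` for all `z` and `w`, and by density
`a • w` is always a multiple of `b • w`. The multiple cannot depend on `w`, so `a = c • b`.
-/

section LinearAlgebra

variable {K V W : Type*} [Field K] [AddCommGroup V] [Module K V] [AddCommGroup W] [Module K W]

lemma exists_linearMap_apply_eq_of_linearIndependent {ι : Type*} {v : ι → V}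
    (hv : LinearIndependent K v) (w : ι → W) : ∃ g : V →ₗ[K] W, ∀ i, g (v i) = w i := by
  obtain ⟨r, hr⟩ := LinearMap.exists_leftInverse_of_injective _ (LinearMap.ker_eq_bot.2 hv)
  refine ⟨Finsupp.linearCombination K w ∘ₗ r, fun i => ?_⟩
  have hri : r (v i) = Finsupp.single i 1 := by
    simpa using LinearMap.congr_fun hr (Finsupp.single i 1)
  simp [hri]

lemma exists_eq_smul_of_forall_exists_apply_eq_smul (S T : V →ₗ[K] W)
    (h : ∀ x, ∃ c : K, S x = c • T x) : ∃ c : K, S = c • T := by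
  by_cases hT : T = 0
  · refine ⟨0, LinearMap.ext fun x => ?_⟩
    obtain ⟨c, hc⟩ := h x
    simp [hc, hT]
  obtain ⟨z, hz⟩ : ∃ z, T z ≠ 0 := by
    by_contra! hzero
    exact hT (LinearMap.ext hzero)
  obtain ⟨l, hl⟩ := h z
  refine ⟨l, LinearMap.ext fun x => ?_⟩
  obtain ⟨c, hc⟩ := h x
  obtain ⟨d, hd⟩ := h (x + z)
  have hcomb : (c - d) • T x = (d - l) • T z := by
    rw [map_add, map_add, hc, hl, smul_add] at hd
    rw [sub_smul, sub_smul, sub_eq_sub_iff_add_eq_add, hd, add_comm]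
  rcases eq_or_ne c d with rfl | hcd
  · have hcl : c = l := by simpa [hz, sub_eq_zero] using hcomb.symm
    rw [hc, hcl, LinearMap.smul_apply]
  · set k := (c - d)⁻¹ * (d - l)
    have hTx : T x = k • T z := by
      rw [mul_smul, ← hcomb, inv_smul_smul₀ (sub_ne_zero.2 hcd)]
    -- `x - k • z` lies in the kernel of `T`, hence in that of `S`.
    obtain ⟨e, he⟩ := h (x - k • z)
    have hSx : S x = k • S z := by simpa [hTx, sub_eq_zero] using he
    rw [hSx, hl, LinearMap.smul_apply, hTx, smul_comm]

end LinearAlgebra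

section SpectralRadius

variable {𝕜 A : Type*} [NormedField 𝕜] [Ring A] [Algebra 𝕜 A]

lemma spectralRadius_smul (c : 𝕜) (a : A) :
    spectralRadius 𝕜 (c • a) = ‖c‖₊ * spectralRadius 𝕜 a := by
  rcases eq_or_ne c 0 with rfl | hc
  · simp
  have hσ : spectrum 𝕜 (c • a) = (c * ·) '' spectrum 𝕜 a :=
    spectrum.unit_smul_eq_smul a (Units.mk0 c hc)
  simp only [spectralRadius, hσ, iSup_image, nnnorm_mul, ENNReal.coe_mul, ENNReal.mul_iSup]

end SpectralRadius

section ModuleSpectrum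

variable {𝕜 A M : Type*} [Ring A] [AddCommGroup M] [Module A M]

lemma mem_spectrum_of_smul_eq_smul [CommSemiring 𝕜] [Algebra 𝕜 A] [Module 𝕜 M]
    [IsScalarTower 𝕜 A M] {a : A} {m : M} {c : 𝕜} (hm : m ≠ 0) (h : a • m = c • m) :
    c ∈ spectrum 𝕜 a := by
  intro hu
  refine hm (hu.smul_left_cancel.1 ?_)
  rw [smul_zero, sub_smul, algebraMap_smul, h, sub_self]

variable [NormedField 𝕜] [Algebra 𝕜 A] [Module 𝕜 M] [IsScalarTower 𝕜 A M]

lemma spectralRadius_eq_of_forall_smul_eq [Nontrivial M] [FaithfulSMul A M] {u : A}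
    {f : Module.Dual 𝕜 M} {v : M} (hu : ∀ m : M, u • m = f m • v) :
    spectralRadius 𝕜 u = ‖f v‖₊ := by
  have : Nontrivial A := Module.nontrivial A M
  refine le_antisymm (iSup₂_le fun k hk => ?_) ?_
  · let p : Polynomial 𝕜 := (.X - .C (f v)) * .X
    have hp : Polynomial.aeval u p = 0 := by
      refine FaithfulSMul.eq_of_smul_eq_smul (α := M) fun m => ?_
      rw [map_mul, map_sub, Polynomial.aeval_X, Polynomial.aeval_C, mul_smul, sub_smul,
        algebraMap_smul, hu m, smul_comm u, hu v, smul_comm, sub_self, zero_smul]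
    have hpk : p.eval k ∈ spectrum 𝕜 (Polynomial.aeval u p) :=
      spectrum.subset_polynomial_aeval u p ⟨k, hk, rfl⟩
    have hroot : (k - f v) * k = 0 := by
      rw [hp, spectrum.zero_eq] at hpk
      simpa [p, sub_eq_zero] using hpk
    rcases mul_eq_zero.1 hroot with hkv | rfl
    · rw [sub_eq_zero.1 hkv]
    · simp
  · rcases eq_or_ne v 0 with rfl | hv
    · simp
    · exact le_iSup₂ (f := fun (k : 𝕜) (_ : k ∈ spectrum 𝕜 u) => (‖k‖₊ : ENNReal)) (f v)
        (mem_spectrum_of_smul_eq_smul hv (hu v))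

end ModuleSpectrum

section Density

variable {𝕜 A M : Type*} [Field 𝕜] [Ring A] [Algebra 𝕜 A] [AddCommGroup M] [Module A M]
  [Module 𝕜 M] [IsScalarTower 𝕜 A M]

lemma exists_forall_smul_eq_of_fg [IsSemisimpleModule A M]
    (hM : Function.Surjective (algebraMap 𝕜 (Module.End A M))) {N : Submodule 𝕜 M} (hN : N.FG)
    (g : M →ₗ[𝕜] M) : ∃ x : A, ∀ m ∈ N, x • m = g m := by
  obtain ⟨s, rfl⟩ := hN
  let g' : Module.End (Module.End A M) M :=
    { toFun := g
      map_add' := map_add g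
      map_smul' := fun φ m => by
        obtain ⟨c, rfl⟩ := hM φ
        simp }
  obtain ⟨x, hx⟩ := jacobson_density g' s
  exact ⟨x, LinearMap.eqOn_span' (f := Algebra.lsmul 𝕜 𝕜 M x) fun m hm => (hx m hm).symm⟩

lemma exists_rank_one_mul_of_fg_range [IsSemisimpleModule A M]
    (hM : Function.Surjective (algebraMap 𝕜 (Module.End A M))) {a : A} {m₀ : M} (hm₀ : a • m₀ ≠ 0)
    (hfg : (LinearMap.range (Algebra.lsmul 𝕜 𝕜 M a)).FG) :
    ∃ (x : A) (f : Module.Dual 𝕜 M) (v : M),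
      f ≠ 0 ∧ v ≠ 0 ∧ ∀ m : M, (x * a) • m = f m • v := by
  obtain ⟨f, hf⟩ : ∃ f : Module.Dual 𝕜 M, f (a • m₀) ≠ 0 := by
    by_contra! hzero
    exact hm₀ ((Module.forall_dual_apply_eq_zero_iff 𝕜 _).1 hzero)
  obtain ⟨x, hx⟩ := exists_forall_smul_eq_of_fg hM hfg (f.smulRight m₀)
  refine ⟨x, f ∘ₗ Algebra.lsmul 𝕜 𝕜 M a, m₀, fun h => hf (LinearMap.congr_fun h m₀),
    right_ne_zero_of_smul hm₀, fun m => ?_⟩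
  rw [mul_smul]
  exact hx _ ⟨m, rfl⟩

lemma exists_forall_smul_eq_apply_smul_smul [IsSimpleModule A M] {u : A} {f : Module.Dual 𝕜 M}
    {v : M} (hv : v ≠ 0) (hu : ∀ m : M, u • m = f m • v) (z : A) (w : M) :
    ∃ x : A, ∀ m : M, x • m = f (z • m) • w := by
  obtain ⟨y, hy : y • v = w⟩ := IsSimpleModule.toSpanSingleton_surjective A hv w
  refine ⟨y * u * z, fun m => ?_⟩
  rw [mul_smul, mul_smul, hu, smul_comm, hy]

end Density

section Domination

variable {𝕜 A M : Type*} [NormedField 𝕜] [Ring A] [Algebra 𝕜 A] [AddCommGroup M] [Module A M]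
  [Module 𝕜 M] [IsScalarTower 𝕜 A M] {u : A} {f : Module.Dual 𝕜 M} {v : M} {a b : A}

lemma exists_smul_eq_smul_smul_of_nnnorm_apply_smul_le [IsSemisimpleModule A M]
    (hM : Function.Surjective (algebraMap 𝕜 (Module.End A M))) (hf : f ≠ 0)
    (hab : ∀ (z : A) (m : M), ‖f (z • a • m)‖₊ ≤ ‖f (z • b • m)‖₊) (m : M) :
    ∃ c : 𝕜, a • m = c • b • m := by
  suffices hmem : a • m ∈ Submodule.span 𝕜 {b • m} by
    obtain ⟨c, hc⟩ := Submodule.mem_span_singleton.1 hmem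
    exact ⟨c, hc.symm⟩
  by_contra hnot
  obtain ⟨g, hga, hgb⟩ := Submodule.exists_le_ker_of_notMem hnot
  obtain ⟨w, hw⟩ := DFunLike.ne_iff.1 hf
  obtain ⟨z, hz⟩ := exists_forall_smul_eq_of_fg hM
    (Submodule.fg_span (Set.toFinite {a • m, b • m})) (g.smulRight w)
  have hza : z • a • m = g (a • m) • w := hz _ (Submodule.subset_span (by simp))
  have hzb : z • b • m = 0 := by
    have hgbm : g (b • m) = 0 := hgb (Submodule.mem_span_singleton_self _)
    rw [hz _ (Submodule.subset_span (by simp)), LinearMap.smulRight_apply, hgbm, zero_smul]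
  have hle := hab z m
  rw [hza, hzb, map_zero, nnnorm_zero, nonpos_iff_eq_zero, nnnorm_eq_zero, map_smul] at hle
  exact smul_ne_zero hga hw hle

variable [IsSimpleModule A M] [FaithfulSMul A M]

lemma nnnorm_apply_smul_le_of_spectralRadius_le (hv : v ≠ 0) (hu : ∀ m : M, u • m = f m • v)
    (hab : ∀ x, spectralRadius 𝕜 (a * x) ≤ spectralRadius 𝕜 (b * x)) (z : A) (m : M) :
    ‖f (z • a • m)‖₊ ≤ ‖f (z • b • m)‖₊ := by
  have : Nontrivial M := IsSimpleModule.nontrivial A M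
  obtain ⟨x, hx⟩ := exists_forall_smul_eq_apply_smul_smul hv hu z m
  have hρ : ∀ c : A, spectralRadius 𝕜 (c * x) = ‖f (z • c • m)‖₊ := fun c =>
    spectralRadius_eq_of_forall_smul_eq (f := f ∘ₗ Algebra.lsmul 𝕜 𝕜 M z) fun m' => by
      rw [mul_smul, hx, smul_comm]
      rfl
  simpa only [hρ, ENNReal.coe_le_coe] using hab x

theorem exists_eq_smul_of_forall_spectralRadius_mul_le
    (hM : Function.Surjective (algebraMap 𝕜 (Module.End A M))) (hf : f ≠ 0) (hv : v ≠ 0)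
    (hu : ∀ m : M, u • m = f m • v)
    (hab : ∀ x, spectralRadius 𝕜 (a * x) ≤ spectralRadius 𝕜 (b * x)) :
    ∃ c : 𝕜, ‖c‖ ≤ 1 ∧ a = c • b := by
  have hle := nnnorm_apply_smul_le_of_spectralRadius_le hv hu hab
  obtain ⟨c, hc⟩ := exists_eq_smul_of_forall_exists_apply_eq_smul
    (Algebra.lsmul 𝕜 𝕜 M a) (Algebra.lsmul 𝕜 𝕜 M b)
    (exists_smul_eq_smul_smul_of_nnnorm_apply_smul_le hM hf hle)
  have hcm : ∀ m : M, a • m = c • b • m := LinearMap.congr_fun hc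
  have hacb : a = c • b := FaithfulSMul.eq_of_smul_eq_smul fun m : M => by
    rw [hcm, smul_assoc]
  by_cases hb : b = 0
  · exact ⟨0, by simp, by simp [hacb, hb]⟩
  obtain ⟨m, hm⟩ : ∃ m : M, b • m ≠ 0 := by
    by_contra! hzero
    exact hb (FaithfulSMul.eq_of_smul_eq_smul fun m : M => by rw [hzero, zero_smul])
  obtain ⟨w, hw⟩ := DFunLike.ne_iff.1 hf
  obtain ⟨z, hz : z • b • m = w⟩ := IsSimpleModule.toSpanSingleton_surjective A hm w
  have hcw : ‖c‖₊ * ‖f w‖₊ ≤ 1 * ‖f w‖₊ := by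
    simpa [hcm, smul_comm z, hz] using hle z m
  exact ⟨c, le_of_mul_le_mul_right hcw (nnnorm_pos.2 hw), hacb⟩

end Domination

section Socle

variable {A M : Type*} [Ring A] [Algebra ℂ A] [AddCommGroup M] [Module A M] [Module ℂ M]
  [IsScalarTower ℂ A M] [IsSemisimpleModule A M]

lemma natCast_le_srank_of_linearIndependent
    (hM : Function.Surjective (algebraMap ℂ (Module.End A M))) {a : A} {n : ℕ} {m : Fin n → M}
    (hm : LinearIndependent ℂ fun i => a • m i) : n ≤ srank a := by
  let c : Fin n → ℂ := fun i => (i : ℕ) + 1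
  have hc : Function.Injective c := fun i j hij => by simpa [c, Fin.ext_iff] using hij
  obtain ⟨g, hg⟩ := exists_linearMap_apply_eq_of_linearIndependent hm fun i => c i • m i
  obtain ⟨x, hx⟩ :=
    exists_forall_smul_eq_of_fg hM (Submodule.fg_span (Set.finite_range (a • m ·))) g
  have heigen : ∀ i, (x * a) • m i = c i • m i := fun i => by
    rw [mul_smul, hx _ (Submodule.subset_span ⟨i, rfl⟩), hg]
  have hsub : Set.range c ⊆ nzSpec (x * a) := by
    rintro _ ⟨i, rfl⟩
    exact ⟨mem_spectrum_of_smul_eq_smul (right_ne_zero_of_smul (hm.ne_zero i)) (heigen i),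
      Nat.cast_add_one_ne_zero _⟩
  calc (n : ℕ∞) ≤ (Set.range c).encard := by simpa using hc.encard_range
    _ ≤ (nzSpec (x * a)).encard := Set.encard_le_encard hsub
    _ ≤ srank a := le_iSup (fun x => (nzSpec (x * a)).encard) x

lemma fg_range_lsmul_of_mem_socle (hM : Function.Surjective (algebraMap ℂ (Module.End A M)))
    {a : A} (ha : a ∈ socle A) : (LinearMap.range (Algebra.lsmul ℂ ℂ M a)).FG := by
  obtain ⟨n, hn⟩ := ENat.ne_top_iff_exists.1 ha
  refine Module.Finite.iff_fg.1 (Module.rank_lt_aleph0_iff.1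
    ((rank_le fun s hs => ?_).trans_lt (Cardinal.natCast_lt_aleph0 (n := n))))
  choose m hm using fun i : s => i.1.2
  have hli : LinearIndependent ℂ fun i => a • m (s.equivFin.symm i) := by
    have hval : (fun i => a • m (s.equivFin.symm i)) = fun i => (s.equivFin.symm i).1.1 :=
      funext fun i => hm _
    rw [hval]
    exact (hs.map' _ (Submodule.ker_subtype _)).comp _ s.equivFin.symm.injective
  exact_mod_cast hn ▸ natCast_le_srank_of_linearIndependent hM hli

end Socle

section Primitivity

variable {A : Type*} [Ring A]

lemma exists_isMaximal_notMem_of_ne_zero (hss : JacobsonSemisimple A) {a : A} (ha : a ≠ 0) :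
    ∃ L : Ideal A, L.IsMaximal ∧ a ∉ L := by
  by_contra! hmem
  refine ha ((TwoSidedIdeal.mem_bot _).1 ?_)
  rw [← hss, ← TwoSidedIdeal.mem_asIdeal, TwoSidedIdeal.asIdeal_jacobson]
  exact Submodule.mem_sInf.2 fun L hL => hmem L hL.2

lemma faithfulSMul_of_minimal_of_leftAnn_trivial {I : TwoSidedIdeal A}
    (hmin : ∀ J : TwoSidedIdeal A, J ≤ I → J = ⊥ ∨ J = I)
    (hann : ∀ x : A, (∀ y ∈ I, x * y = 0) → x = 0) {M : Type*} [AddCommGroup M] [Module A M]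
    {a : A} (ha : a ∈ I) {m : M} (ham : a • m ≠ 0) : FaithfulSMul A M := by
  let N : TwoSidedIdeal A := TwoSidedIdeal.ker (Module.toAddMonoidEnd A M)
  have hN : ∀ {x}, x ∈ N ↔ ∀ m : M, x • m = 0 :=
    (TwoSidedIdeal.mem_ker _).trans DFunLike.ext_iff
  have hNI : N ⊓ I = ⊥ := (hmin _ inf_le_right).resolve_right fun h =>
    ham (hN.1 (inf_eq_right.1 h ha) m)
  have hN0 : ∀ x ∈ N, x = 0 := fun x hx => hann x fun y hy => by
    rw [← TwoSidedIdeal.mem_bot, ← hNI]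
    exact ⟨N.mul_mem_right _ _ hx, I.mul_mem_left _ _ hy⟩
  exact ⟨fun {x y} hxy => sub_eq_zero.1 <| hN0 _ <| hN.2 fun m => by
    rw [sub_smul, hxy, sub_self]⟩

end Primitivity

section Schur

/-- Schur's lemma in its strong form: every endomorphism of a simple left module, presented as
`A ⧸ L` with `L` a maximal left ideal, is a scalar. This replaces the complete norm of a Banach
algebra, where it follows from the nonemptiness of the spectrum. -/
def IsSchurian (𝕜 A : Type*) [Field 𝕜] [Ring A] [Algebra 𝕜 A] : Prop :=
  ∀ L : Ideal A, L.IsMaximal → Function.Surjective (algebraMap 𝕜 (Module.End A (A ⧸ L)))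

lemma continuous_end_quotient {A : Type*} [Ring A] [TopologicalSpace A] [IsTopologicalRing A]
    {L : Ideal A} (φ : Module.End A (A ⧸ L)) : Continuous φ := by
  obtain ⟨b, hb⟩ := L.mkQ_surjective (φ (L.mkQ 1))
  have hφ : φ ∘ L.mkQ = fun x => L.mkQ (x * b) := funext fun x => by
    have hx : L.mkQ x = x • L.mkQ 1 := by rw [← map_smul, smul_eq_mul, mul_one]
    rw [Function.comp_apply, hx, map_smul, ← hb, ← map_smul, smul_eq_mul]
  have hmk := L.isOpenQuotientMap_mkQ
  rw [hmk.isQuotientMap.continuous_iff, hφ]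
  exact hmk.continuous.comp (continuous_mul_const b)

theorem isSchurian_of_completeSpace (A : Type*) [NormedRing A] [NormedAlgebra ℂ A]
    [CompleteSpace A] : IsSchurian ℂ A := by
  intro L hL φ
  have : IsSimpleModule A (A ⧸ L) := isSimpleModule_iff_isCoatom.2 hL.out
  have : Nontrivial (A ⧸ L) := IsSimpleModule.nontrivial A _
  let Φ : (A ⧸ L) →L[ℂ] (A ⧸ L) := ⟨φ.restrictScalars ℂ, continuous_end_quotient φ⟩
  obtain ⟨z, hz⟩ := spectrum.nonempty Φ
  refine ⟨z, ?_⟩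
  by_contra hne
  have hbij : Function.Bijective (algebraMap ℂ (Module.End A (A ⧸ L)) z - φ) :=
    LinearMap.bijective_of_ne_zero (sub_ne_zero.2 hne)
  exact hz (ContinuousLinearMap.isUnit_iff_bijective.2 hbij)

end Schur

theorem spectralRadius_domination_of_socle_minimal_of_leftAnn_trivial_general
    {A : Type*} [Ring A] [Algebra ℂ A] (hschur : IsSchurian ℂ A)
    (hss : JacobsonSemisimple A) (hmin : SocleIsMinimalTwoSidedIdeal A)
    (hann : LeftAnnSocleTrivial A) :
    ∀ a b : A,
      ((∀ x : A, spectralRadius ℂ (a * x) ≤ spectralRadius ℂ (b * x)) ↔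
        ∃ lam : ℂ, ‖lam‖ ≤ 1 ∧ a = lam • b) := by
  intro a b
  constructor
  · intro hab
    obtain ⟨I, hI, hI0, hImin⟩ := hmin
    obtain ⟨s, hsI, hs0⟩ : ∃ s ∈ I, s ≠ 0 := by
      by_contra! hzero
      exact hI0 (eq_bot_iff.2 fun x hx => (TwoSidedIdeal.mem_bot A).2 (hzero x hx))
    obtain ⟨L, hL, hsL⟩ := exists_isMaximal_notMem_of_ne_zero hss hs0
    have hM := hschur L hL
    have : IsSimpleModule A (A ⧸ L) := isSimpleModule_iff_isCoatom.2 hL.out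
    have hs1 : s • L.mkQ 1 ≠ 0 := by
      rwa [← map_smul, smul_eq_mul, mul_one, Submodule.mkQ_apply, Ne, Submodule.Quotient.mk_eq_zero]
    have : FaithfulSMul A (A ⧸ L) := faithfulSMul_of_minimal_of_leftAnn_trivial hImin
      (fun x hx => hann.le fun y hy => hx y (hI.ge hy)) hsI hs1
    obtain ⟨x, f, v, hf, hv, hu⟩ :=
      exists_rank_one_mul_of_fg_range hM hs1 (fg_range_lsmul_of_mem_socle hM (hI.le hsI))
    exact exists_eq_smul_of_forall_spectralRadius_mul_le hM hf hv hu hab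
  · rintro ⟨c, hc, rfl⟩ x
    rw [smul_mul_assoc, spectralRadius_smul]
    exact mul_le_of_le_one_left' (by exact_mod_cast hc)

theorem spectralRadius_domination_of_socle_minimal_of_leftAnn_trivial
    {A : Type*} [NormedRing A] [NormOneClass A] [NormedAlgebra ℂ A] [CompleteSpace A]
    (hss : JacobsonSemisimple A) (hmin : SocleIsMinimalTwoSidedIdeal A)
    (hann : LeftAnnSocleTrivial A) :
    ∀ a b : A,
      ((∀ x : A, spectralRadius ℂ (a * x) ≤ spectralRadius ℂ (b * x)) ↔
        ∃ lam : ℂ, ‖lam‖ ≤ 1 ∧ a = lam • b) :=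
  spectralRadius_domination_of_socle_minimal_of_leftAnn_trivial_general
    (isSchurian_of_completeSpace A) hss hmin hann
end
end

section
/- Let A be a complex semisimple unital Banach algebra with Soc A ≠ {0}. Then A is prime if and only if for all a, b ∈ A the following are equivalent: (i) ρ(ax) ≤ ρ(bx) for all x ∈ A; (ii) a = λb for some λ ∈ ℂ with |λ| ≤ 1. -/
/-!
If a left ideal `L ≠ 0` of a semisimple algebra contains no minimal left ideal, then intersecting
it with suitable maximal left ideals never reaches `0`, so `L` maps onto products
`A ⧸ M₁ × ⋯ × A ⧸ Mₙ` of arbitrary length. For `L = A a` this provides elements `x a` with any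
prescribed nonzero eigenvalues, so an element `a ≠ 0` of finite rank lies above a minimal left
ideal, which is `A e` for an idempotent `e` with `e A e` a division ring.

Domination tested on `x = v z` with `v ∈ A e` and `z ∈ e A` compares the elements `z a v` and
`z b v` of this division ring, whose nonzero spectra have at most one point. It follows that
`b v = c_v a v` with `‖c_v‖ ≥ 1` whenever `a v ≠ 0`; such a pointwise scalar does not depend on
`v`, and primeness carries `b v = c a v` from `A e` over to `A`.

Conversely, if `a A b = 0` then `a x` and `b x` are orthogonal, so `a` is dominated by `a + b`.
-/

open Complex

noncomputable section

section LinearAlgebra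

variable {K V W : Type*} [Field K] [AddCommGroup V] [Module K V] [AddCommGroup W] [Module K W]
  {f g : V →ₗ[K] W}

lemma ker_le_ker_of_forall_exists_eq_smul (hf : f ≠ 0)
    (h : ∀ v, f v ≠ 0 → ∃ c : K, c ≠ 0 ∧ g v = c • f v) : f.ker ≤ g.ker := by
  obtain ⟨v₀, hv₀⟩ := DFunLike.ne_iff.1 hf
  intro v hv
  rw [LinearMap.mem_ker] at hv ⊢
  have hshift (t : K) : ∃ c : K, c ≠ 0 ∧ g v₀ + t • g v = c • f v₀ := by
    simpa [hv] using h (v₀ + t • v) (by simpa [hv] using hv₀)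
  obtain ⟨c₀, -, h₀⟩ := hshift 0
  obtain ⟨c₁, -, h₁⟩ := hshift 1
  have hgv : g v = (c₁ - c₀) • f v₀ := by
    rw [sub_smul, ← h₀, ← h₁]
    module
  by_contra hgv0
  have hd : c₁ - c₀ ≠ 0 := fun hd => hgv0 (by rw [hgv, hd, zero_smul])
  obtain ⟨c, hc, hct⟩ := hshift (-c₀ / (c₁ - c₀))
  have hzero : c • f v₀ = 0 := by
    rw [← hct, hgv, smul_smul, div_mul_cancel₀ _ hd, neg_smul, ← h₀]
    module
  exact (smul_ne_zero hc hv₀) hzero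

theorem exists_eq_smul_of_forall_exists_eq_smul (hf : f ≠ 0)
    (h : ∀ v, f v ≠ 0 → ∃ c : K, c ≠ 0 ∧ g v = c • f v) : ∃ c : K, g = c • f := by
  obtain ⟨v₀, hv₀⟩ := DFunLike.ne_iff.1 hf
  obtain ⟨c₀, -, h₀⟩ := h v₀ hv₀
  refine ⟨c₀, LinearMap.ext fun v => ?_⟩
  rw [LinearMap.smul_apply]
  by_cases hdep : ∃ t : K, f v = t • f v₀
  · obtain ⟨t, ht⟩ := hdep
    have hker : g (v - t • v₀) = 0 :=
      ker_le_ker_of_forall_exists_eq_smul hf h (by simp [ht])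
    rw [map_sub, map_smul, sub_eq_zero] at hker
    rw [hker, h₀, ht, smul_comm]
  · obtain ⟨c₁, -, h₁⟩ := h v fun hv => hdep ⟨0, by rw [hv, zero_smul]⟩
    obtain ⟨c, -, hc⟩ := h (v + v₀) fun hv =>
      hdep ⟨-1, by rw [neg_one_smul]; exact eq_neg_of_add_eq_zero_left (by rwa [← map_add])⟩
    rw [map_add, map_add, h₁, h₀] at hc
    have hrel : (c₁ - c) • f v = (c - c₀) • f v₀ := by
      rw [sub_smul, sub_smul, sub_eq_sub_iff_add_eq_add, hc, smul_add, add_comm]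
    have hc₁ : c₁ = c := by
      by_contra hne
      refine hdep ⟨(c₁ - c)⁻¹ * (c - c₀), ?_⟩
      rw [mul_smul, ← hrel, inv_smul_smul₀ (sub_ne_zero.2 hne)]
    rw [hc₁, sub_self, zero_smul, eq_comm, smul_eq_zero, sub_eq_zero] at hrel
    rw [h₁, hc₁, hrel.resolve_right hv₀]

end LinearAlgebra

section Ring

variable {R : Type*} [Ring R]

lemma JacobsonSemisimple.jacobson_bot (hR : JacobsonSemisimple R) :
    (⊥ : Ideal R).jacobson = ⊥ := by
  simpa [TwoSidedIdeal.asIdeal_jacobson] using congrArg TwoSidedIdeal.asIdeal hR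

lemma JacobsonSemisimple.eq_zero_of_forall_mul_mul_self (hR : JacobsonSemisimple R) {x : R}
    (hx : ∀ y, x * y * x = 0) : x = 0 := by
  rw [← Ideal.mem_bot, ← hR.jacobson_bot, Ideal.mem_jacobson_iff]
  refine fun y => ⟨1 - y * x, ?_⟩
  rw [Ideal.mem_bot]
  have hnil : y * x * y * x = 0 := by rw [mul_assoc y, mul_assoc, hx, mul_zero]
  rw [sub_mul, one_mul, sub_mul, hnil]
  abel

/-- The largest two-sided ideal `I` with `I S = 0`, encoded by `x R s = 0` for `s ∈ S`. It turns a
product `a R b = 0` of elements into a product of ideals. -/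
def leftAnnihilatorIdeal (S : Set R) : TwoSidedIdeal R :=
  .mk' {x | ∀ s ∈ S, ∀ t, x * t * s = 0}
    (fun s _ t => by rw [zero_mul, zero_mul])
    (fun hx hy s hs t => by rw [add_mul, add_mul, hx s hs, hy s hs, add_zero])
    (fun hx s hs t => by rw [neg_mul, neg_mul, hx s hs, neg_zero])
    (fun {x y} hy s hs t => by rw [mul_assoc x, mul_assoc x, hy s hs, mul_zero])
    (fun {x y} hx s hs t => by rw [mul_assoc x, hx s hs])

/-- The largest two-sided ideal `J` with `S J = 0`, the mirror image of `leftAnnihilatorIdeal`. -/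
def rightAnnihilatorIdeal (S : Set R) : TwoSidedIdeal R :=
  .mk' {y | ∀ s ∈ S, ∀ t, s * t * y = 0}
    (fun s _ t => by rw [mul_zero])
    (fun hx hy s hs t => by rw [mul_add, hx s hs, hy s hs, add_zero])
    (fun hx s hs t => by rw [mul_neg, hx s hs, neg_zero])
    (fun {x y} hy s hs t => by rw [← mul_assoc, mul_assoc s, hy s hs])
    (fun {x y} hx s hs t => by rw [← mul_assoc, hx s hs, zero_mul])

lemma mem_leftAnnihilatorIdeal {S : Set R} {x : R} :
    x ∈ leftAnnihilatorIdeal S ↔ ∀ s ∈ S, ∀ t, x * t * s = 0 :=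
  TwoSidedIdeal.mem_mk' ..

lemma mem_rightAnnihilatorIdeal {S : Set R} {y : R} :
    y ∈ rightAnnihilatorIdeal S ↔ ∀ s ∈ S, ∀ t, s * t * y = 0 :=
  TwoSidedIdeal.mem_mk' ..

theorem isPrimeAlgebra_iff :
    IsPrimeAlgebra R ↔ ∀ a b : R, (∀ x, a * x * b = 0) → a = 0 ∨ b = 0 := by
  have exists_ne_zero (I : TwoSidedIdeal R) (hI : I ≠ ⊥) : ∃ a ∈ I, a ≠ 0 := by
    by_contra! h
    exact hI (le_bot_iff.1 fun x hx => (TwoSidedIdeal.mem_bot R).2 (h x hx))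
  constructor
  · intro hR a b hab
    by_contra! hne
    set I := leftAnnihilatorIdeal {b}
    set J := rightAnnihilatorIdeal (I : Set R)
    have ha : a ∈ I := mem_leftAnnihilatorIdeal.2 fun s hs => hs ▸ hab
    have hb : b ∈ J := mem_rightAnnihilatorIdeal.2 fun s hs =>
      mem_leftAnnihilatorIdeal.1 hs b rfl
    obtain ⟨x, hx, y, hy, hxy⟩ := hR I J
      (fun h => hne.1 ((TwoSidedIdeal.mem_bot R).1 (h ▸ ha)))
      (fun h => hne.2 ((TwoSidedIdeal.mem_bot R).1 (h ▸ hb)))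
    exact hxy (by simpa using mem_rightAnnihilatorIdeal.1 hy x hx 1)
  · intro h I J hI hJ
    obtain ⟨a, haI, ha⟩ := exists_ne_zero I hI
    obtain ⟨b, hbJ, hb⟩ := exists_ne_zero J hJ
    by_contra! hIJ
    exact (h a b fun x => hIJ _ (I.mul_mem_right _ _ haI) _ hbJ).elim ha hb

lemma JacobsonSemisimple.exists_isMaximal_not_le (hR : JacobsonSemisimple R) {L : Ideal R}
    (hL : L ≠ ⊥) : ∃ M : Ideal R, M.IsMaximal ∧ ¬ L ≤ M := by
  by_contra! h
  refine hL (le_bot_iff.1 ?_)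
  rw [← hR.jacobson_bot]
  exact le_sInf fun M hM => h M hM.2

/-- The conclusion says that the natural map from `L` to the product of the `R ⧸ M i` is onto. -/
theorem JacobsonSemisimple.exists_isMaximal_forall_exists_sub_mem (hR : JacobsonSemisimple R)
    (n : ℕ) {L : Ideal R} (hL : L ≠ ⊥) (hatom : ∀ I ≤ L, ¬ IsAtom I) :
    ∃ M : Fin n → Ideal R, (∀ i, (M i).IsMaximal) ∧
      ∀ t : Fin n → R, ∃ w ∈ L, ∀ i, w - t i ∈ M i := by
  induction n generalizing L with
  | zero => exact ⟨Fin.elim0, fun i => i.elim0, fun _ => ⟨0, L.zero_mem, fun i => i.elim0⟩⟩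
  | succ n ih =>
    obtain ⟨M₀, hM₀, hLM₀⟩ := hR.exists_isMaximal_not_le hL
    have hcodisjoint : Codisjoint L M₀ :=
      (Ideal.isMaximal_def.1 hM₀).not_le_iff_codisjoint.1 hLM₀ |>.symm
    have hinf : L ⊓ M₀ ≠ ⊥ := fun hbot => hatom L le_rfl <|
      (IsCompl.mk (disjoint_iff.2 hbot) hcodisjoint).isAtom_iff_isCoatom.2
        (Ideal.isMaximal_def.1 hM₀)
    obtain ⟨M, hM, hsurj⟩ := ih hinf fun I hI => hatom I (hI.trans inf_le_left)
    refine ⟨Fin.cons M₀ M, Fin.cases hM₀ hM, fun t => ?_⟩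
    obtain ⟨w₀, hw₀, m, hm, hadd⟩ :=
      Submodule.mem_sup.1 (hcodisjoint.eq_top ▸ Submodule.mem_top : t 0 ∈ L ⊔ M₀)
    obtain ⟨w, hw, hwt⟩ := hsurj fun i => t i.succ - w₀
    refine ⟨w + w₀, L.add_mem hw.1 hw₀, Fin.cases ?_ fun i => ?_⟩
    · have : w + w₀ - t 0 = w - m := by rw [← hadd]; abel
      exact this ▸ M₀.sub_mem hw.2 hm
    · have : w + w₀ - t i.succ = w - (t i.succ - w₀) := by abel
      exact this ▸ hwt i

/-- A minimal idempotent: a nonzero idempotent `e` whose left ideal `R e` is minimal. These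
make the corner `e R e` a division ring, in which the spectral arguments take place. -/
structure IsMinimalIdempotent (e : R) : Prop where
  isIdempotentElem : IsIdempotentElem e
  isAtom_span : IsAtom (Ideal.span {e})

namespace IsMinimalIdempotent

variable {e : R}

lemma ne_zero (he : IsMinimalIdempotent e) : e ≠ 0 :=
  fun h => he.isAtom_span.1 (by rw [h, Ideal.span_singleton_eq_bot])

lemma exists_mul_eq (he : IsMinimalIdempotent e) {v : R} (hve : v * e = v) (hv : v ≠ 0) :
    ∃ z, e * z = z ∧ z * v = e := by
  have hle : Ideal.span {v} ≤ Ideal.span {e} :=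
    (Ideal.span_singleton_le_iff_mem _).2 (Ideal.mem_span_singleton'.2 ⟨v, hve⟩)
  have heq : Ideal.span {v} = Ideal.span {e} :=
    (he.isAtom_span.le_iff.1 hle).resolve_left (by rwa [Ideal.span_singleton_eq_bot])
  obtain ⟨z, hz⟩ := Ideal.mem_span_singleton'.1 (heq ▸ Ideal.mem_span_singleton_self e)
  exact ⟨e * z, by rw [← mul_assoc, he.isIdempotentElem.eq],
    by rw [mul_assoc, hz, he.isIdempotentElem.eq]⟩

lemma exists_mul_eq_and_mul_eq (he : IsMinimalIdempotent e) {g : R} (heg : e * g = g)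
    (hge : g * e = g) (hg : g ≠ 0) :
    ∃ z, e * z = z ∧ z * e = z ∧ z * g = e ∧ g * z = e := by
  obtain ⟨z', hez', hz'g⟩ := he.exists_mul_eq hge hg
  obtain ⟨z, hze, hez, hzg⟩ : ∃ z, z * e = z ∧ e * z = z ∧ z * g = e :=
    ⟨z' * e, by rw [mul_assoc, he.isIdempotentElem.eq], by rw [← mul_assoc, hez'],
      by rw [mul_assoc, heg, hz'g]⟩
  have hz : z ≠ 0 := fun h => he.ne_zero (by rw [← hzg, h, zero_mul])
  obtain ⟨w, -, hwz⟩ := he.exists_mul_eq hze hz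
  have hwe : w * e = g := by rw [← hzg, ← mul_assoc, hwz, heg]
  exact ⟨z, hez, hze, hzg, by rw [← hwe, mul_assoc, hez, hwz]⟩

end IsMinimalIdempotent

/-- Brauer's lemma. -/
theorem exists_isMinimalIdempotent_of_isAtom {I : Ideal R} (hI : IsAtom I) {w u : R} (hw : w ∈ I)
    (hu : u ∈ I) (hwu : w * u ≠ 0) :
    ∃ e : R, IsMinimalIdempotent e := by
  set mulRight : R →ₗ[R] R := LinearMap.toSpanSingleton R R u
  have hmap : Submodule.map mulRight I = I := by
    refine (hI.le_iff.1 ?_).resolve_left fun hbot => hwu ?_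
    · rintro _ ⟨x, -, rfl⟩
      exact I.mul_mem_left x hu
    · exact (Submodule.mem_bot R).1 (hbot ▸ Submodule.mem_map_of_mem (f := mulRight) hw)
  have hker : I ⊓ mulRight.ker = ⊥ :=
    (hI.not_le_iff_disjoint.1 fun hle => hwu (hle hw)).eq_bot
  obtain ⟨e, heI, heu⟩ : u ∈ Submodule.map mulRight I := hmap.symm ▸ hu
  replace heu : e * u = u := heu
  have hidem : e * e - e ∈ I ⊓ mulRight.ker := by
    refine ⟨I.sub_mem (I.mul_mem_left e heI) heI, ?_⟩
    change (e * e - e) * u = 0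
    rw [sub_mul, mul_assoc, heu, heu, sub_self]
  rw [hker, Submodule.mem_bot, sub_eq_zero] at hidem
  have he0 : e ≠ 0 := by
    rintro rfl
    rw [zero_mul] at heu
    exact hwu (by rw [← heu, mul_zero])
  have hspan : Ideal.span {e} = I :=
    (hI.le_iff.1 ((Ideal.span_singleton_le_iff_mem I).2 heI)).resolve_left
      (by rwa [Ideal.span_singleton_eq_bot])
  exact ⟨e, hidem, hspan.symm ▸ hI⟩

lemma JacobsonSemisimple.exists_isMinimalIdempotent (hR : JacobsonSemisimple R) {I : Ideal R}
    (hI : IsAtom I) : ∃ e : R, IsMinimalIdempotent e := by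
  obtain ⟨x, hxI, hx⟩ := Submodule.exists_mem_ne_zero_of_ne_bot hI.1
  obtain ⟨y, hy⟩ : ∃ y, x * y * x ≠ 0 := by
    by_contra! h
    exact hx (hR.eq_zero_of_forall_mul_mul_self h)
  exact exists_isMinimalIdempotent_of_isAtom hI hxI (I.mul_mem_left y hxI) (by rwa [← mul_assoc])

end Ring

section Spectrum

variable {𝕜 A : Type*} [Field 𝕜] [Ring A] [Algebra 𝕜 A]

lemma mem_spectrum_of_sub_mem {M : Ideal A} (hM : M ≠ ⊤) {x : A} {k : 𝕜}
    (h : x - algebraMap 𝕜 A k ∈ M) : k ∈ spectrum 𝕜 x := fun hunit =>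
  hM (M.eq_top_of_isUnit_mem (by simpa using M.neg_mem h) hunit)

lemma one_mem_spectrum_of_isIdempotentElem {e : A} (he : IsIdempotentElem e) (he0 : e ≠ 0) :
    (1 : 𝕜) ∈ spectrum 𝕜 e := by
  rw [spectrum.mem_iff, map_one]
  exact fun h => he0 (h.mul_right_eq_zero.1 he.one_sub_mul_self)

lemma mem_spectrum_add_of_mul_eq_zero {u v : A} (huv : u * v = 0) (hvu : v * u = 0) {k : 𝕜}
    (hk : k ≠ 0) (hku : k ∈ spectrum 𝕜 u) : k ∈ spectrum 𝕜 (u + v) := by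
  set κ := algebraMap 𝕜 A k
  refine fun hunit => hku ?_
  have hfactor : (κ - u) * (κ - v) = κ * (κ - (u + v)) := by
    rw [sub_mul, mul_sub, mul_sub, mul_sub, huv, ← Algebra.commutes k u, mul_add]
    abel
  have hcomm : Commute (κ - u) (κ - v) :=
    ((Algebra.commute_algebraMap_left k κ).sub_right (Algebra.commute_algebraMap_left k v)).sub_left
      ((Algebra.commute_algebraMap_right k u).sub_right (huv.trans hvu.symm))
  have hprod : IsUnit ((κ - u) * (κ - v)) := by
    rw [hfactor]
    exact ((IsUnit.mk0 k hk).map (algebraMap 𝕜 A)).mul hunit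
  exact (hcomm.isUnit_mul_iff.1 hprod).1

-- Multiplication of matrices that are block diagonal with respect to `1 = e + (1 - e)`.
lemma add_smul_one_sub_mul {e g z : A} (he : IsIdempotentElem e) (hge : g * e = g)
    (hez : e * z = z) (hgz : g * z = e) {k l : 𝕜} (hkl : k * l = 1) :
    (g + k • (1 - e)) * (z + l • (1 - e)) = 1 := by
  have hcross : g * (1 - e) = 0 := by rw [mul_sub, mul_one, hge, sub_self]
  have hcross' : (1 - e) * z = 0 := by rw [sub_mul, one_mul, hez, sub_self]
  rw [add_mul, mul_add, mul_add, hgz, mul_smul_comm, hcross, smul_mul_assoc, hcross',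
    smul_mul_smul_comm, hkl, he.one_sub.eq, smul_zero, smul_zero, one_smul, add_zero, zero_add,
    add_sub_cancel]

lemma IsMinimalIdempotent.eq_smul_of_mem_spectrum {e f : A} (he : IsMinimalIdempotent e)
    (hef : e * f = f) (hfe : f * e = f) {k : 𝕜} (hk : k ≠ 0) (hkf : k ∈ spectrum 𝕜 f) :
    f = k • e := by
  by_contra hne
  have hee : e * e = e := he.isIdempotentElem
  have hblock : algebraMap 𝕜 A k - f = (k • e - f) + k • (1 - e) := by
    rw [Algebra.algebraMap_eq_smul_one]
    module
  have hge : (k • e - f) * e = k • e - f := by rw [sub_mul, smul_mul_assoc, hee, hfe]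
  have heg : e * (k • e - f) = k • e - f := by rw [mul_sub, mul_smul_comm, hee, hef]
  obtain ⟨z, hez, hze, hzg, hgz⟩ :=
    he.exists_mul_eq_and_mul_eq heg hge (sub_ne_zero.2 (Ne.symm hne))
  refine hkf (spectrum.mem_resolventSet_of_left_right_inverse (b := z + k⁻¹ • (1 - e))
    (c := z + k⁻¹ • (1 - e)) ?_ ?_) <;> rw [hblock]
  · exact add_smul_one_sub_mul hee hge hez hgz (mul_inv_cancel₀ hk)
  · exact add_smul_one_sub_mul hee hze heg hzg (inv_mul_cancel₀ hk)

end Spectrum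

section SpectralRadius

variable {𝕜 A : Type*} [NormedField 𝕜] [Ring A] [Algebra 𝕜 A]

lemma spectralRadius_le_of_forall_mem {a : A} {r : ENNReal}
    (h : ∀ k ∈ spectrum 𝕜 a, k ≠ 0 → (‖k‖₊ : ENNReal) ≤ r) : spectralRadius 𝕜 a ≤ r := by
  refine iSup₂_le fun k hk => ?_
  obtain rfl | hk0 := eq_or_ne k 0
  · simp
  · exact h k hk hk0

lemma nnnorm_le_spectralRadius {a : A} {k : 𝕜} (hk : k ∈ spectrum 𝕜 a) :
    (‖k‖₊ : ENNReal) ≤ spectralRadius 𝕜 a :=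
  le_iSup₂ (f := fun (k : 𝕜) (_ : k ∈ spectrum 𝕜 a) => (‖k‖₊ : ENNReal)) k hk

lemma spectralRadius_mul_comm (a b : A) : spectralRadius 𝕜 (a * b) = spectralRadius 𝕜 (b * a) := by
  have le (a b : A) : spectralRadius 𝕜 (a * b) ≤ spectralRadius 𝕜 (b * a) :=
    spectralRadius_le_of_forall_mem fun k hk hk0 =>
      nnnorm_le_spectralRadius ((spectrum.nonzero_mul_comm a b).subset ⟨hk, hk0⟩).1
  exact (le a b).antisymm (le b a)

lemma spectralRadius_le_spectralRadius_add {u v : A} (huv : u * v = 0) (hvu : v * u = 0) :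
    spectralRadius 𝕜 u ≤ spectralRadius 𝕜 (u + v) :=
  spectralRadius_le_of_forall_mem fun _ hk hk0 =>
    nnnorm_le_spectralRadius (mem_spectrum_add_of_mul_eq_zero huv hvu hk0 hk)

lemma spectralRadius_smul_le {c : 𝕜} (hc : ‖c‖ ≤ 1) (x : A) :
    spectralRadius 𝕜 (c • x) ≤ spectralRadius 𝕜 x := by
  obtain rfl | hc0 := eq_or_ne c 0
  · simp
  refine spectralRadius_le_of_forall_mem fun k hk _ => ?_
  have hck : c⁻¹ • k ∈ spectrum 𝕜 x := by
    rwa [← spectrum.smul_mem_smul_iff (r := Units.mk0 c hc0), Units.smul_mk0, Units.smul_mk0,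
      smul_inv_smul₀ hc0]
  calc
    (‖k‖₊ : ENNReal) = ‖c‖₊ * ‖c⁻¹ • k‖₊ := by
      rw [← ENNReal.coe_mul, ← nnnorm_mul, ← smul_eq_mul, smul_inv_smul₀ hc0]
    _ ≤ ‖c⁻¹ • k‖₊ := mul_le_of_le_one_left' (by exact_mod_cast hc)
    _ ≤ spectralRadius 𝕜 x := nnnorm_le_spectralRadius hck

lemma one_le_spectralRadius_of_isIdempotentElem {e : A} (he : IsIdempotentElem e) (he0 : e ≠ 0) :
    1 ≤ spectralRadius 𝕜 e := by
  simpa using nnnorm_le_spectralRadius (one_mem_spectrum_of_isIdempotentElem (𝕜 := 𝕜) he he0)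

namespace IsMinimalIdempotent

variable {a b e : A}

lemma exists_eq_smul_of_one_le_spectralRadius {f : A} (he : IsMinimalIdempotent e)
    (hef : e * f = f) (hfe : f * e = f) (hf : 1 ≤ spectralRadius 𝕜 f) :
    ∃ c : 𝕜, 1 ≤ ‖c‖ ∧ f = c • e := by
  obtain ⟨c, hfc⟩ : ∃ c : 𝕜, f = c • e := by
    by_contra! hne
    have hzero : spectralRadius 𝕜 f ≤ 0 := spectralRadius_le_of_forall_mem fun k hk hk0 =>
      absurd (he.eq_smul_of_mem_spectrum hef hfe hk0 hk) (hne k)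
    exact absurd (hf.trans hzero) (by simp)
  have hle : spectralRadius 𝕜 f ≤ ‖c‖₊ := spectralRadius_le_of_forall_mem fun k hk hk0 => by
    have hkc : k • e = c • e := (he.eq_smul_of_mem_spectrum hef hfe hk0 hk).symm.trans hfc
    rw [smul_left_injective 𝕜 he.ne_zero hkc]
  exact ⟨c, by exact_mod_cast hf.trans hle, hfc⟩

lemma exists_mul_mul_eq_smul (he : IsMinimalIdempotent e)
    (hab : ∀ x, spectralRadius 𝕜 (a * x) ≤ spectralRadius 𝕜 (b * x)) {v z : A}
    (hve : v * e = v) (hez : e * z = z) (hz : z * (a * v) = e) :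
    ∃ c : 𝕜, 1 ≤ ‖c‖ ∧ z * (b * v) = c • e := by
  refine he.exists_eq_smul_of_one_le_spectralRadius (by rw [← mul_assoc, hez])
    (by rw [mul_assoc, mul_assoc, hve]) ?_
  calc
    1 ≤ spectralRadius 𝕜 (z * (a * v)) :=
      hz ▸ one_le_spectralRadius_of_isIdempotentElem he.isIdempotentElem he.ne_zero
    _ = spectralRadius 𝕜 (a * (v * z)) := by rw [spectralRadius_mul_comm, mul_assoc]
    _ ≤ spectralRadius 𝕜 (b * (v * z)) := hab _
    _ = spectralRadius 𝕜 (z * (b * v)) := by rw [spectralRadius_mul_comm z, mul_assoc]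

theorem exists_mul_eq_smul_mul (he : IsMinimalIdempotent e)
    (hab : ∀ x, spectralRadius 𝕜 (a * x) ≤ spectralRadius 𝕜 (b * x)) {v : A}
    (hve : v * e = v) (hav : a * v ≠ 0) : ∃ c : 𝕜, 1 ≤ ‖c‖ ∧ b * v = c • (a * v) := by
  have hav_e : a * v * e = a * v := by rw [mul_assoc, hve]
  obtain ⟨z, hez, hzav⟩ := he.exists_mul_eq hav_e hav
  obtain ⟨c, hc, hzbv⟩ := he.exists_mul_mul_eq_smul hab hve hez hzav
  refine ⟨c, hc, ?_⟩
  by_contra hne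
  obtain ⟨z', hez', hz'⟩ := he.exists_mul_eq (v := b * v - c • (a * v))
    (by rw [sub_mul, smul_mul_assoc, hav_e, mul_assoc, hve]) (sub_ne_zero.2 hne)
  -- `y` kills `a v` but not `b v`, so adding a multiple of it to `z` breaks the domination.
  obtain ⟨y, hey, hyav, hybv⟩ : ∃ y, e * y = y ∧ y * (a * v) = 0 ∧ y * (b * v) = e := by
    have hyav : (z' - z' * (a * v) * z) * (a * v) = 0 := by
      rw [sub_mul, mul_assoc _ z, hzav, mul_assoc z', hav_e, sub_self]
    refine ⟨z' - z' * (a * v) * z, ?_, hyav, ?_⟩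
    · rw [mul_sub, ← mul_assoc, ← mul_assoc, hez']
    · calc
        (z' - z' * (a * v) * z) * (b * v) = z' * (b * v - c • (a * v * e)) := by
          rw [sub_mul, mul_assoc _ z, hzbv, mul_smul_comm, mul_assoc z', mul_sub, mul_smul_comm]
        _ = e := by rw [hav_e, hz']
  obtain ⟨c', hc', hcontra⟩ := he.exists_mul_mul_eq_smul hab hve (z := z - c • y)
    (by rw [mul_sub, mul_smul_comm, hez, hey])
    (by rw [sub_mul, smul_mul_assoc, hyav, hzav, smul_zero, sub_zero])
  rw [sub_mul, smul_mul_assoc, hzbv, hybv, sub_self, eq_comm, smul_eq_zero] at hcontra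
  rw [hcontra.resolve_right he.ne_zero, norm_zero] at hc'
  exact absurd hc' (by norm_num)

theorem exists_eq_smul (he : IsMinimalIdempotent e) (hA : IsPrimeAlgebra A)
    (hab : ∀ x, spectralRadius 𝕜 (a * x) ≤ spectralRadius 𝕜 (b * x)) :
    ∃ c : 𝕜, ‖c‖ ≤ 1 ∧ a = c • b := by
  have faithful {x : A} (hx : LinearMap.mulLeftRight 𝕜 (x, e) = 0) : x = 0 :=
    (isPrimeAlgebra_iff.1 hA x e fun y => LinearMap.congr_fun hx y).resolve_right he.ne_zero
  obtain rfl | ha := eq_or_ne a 0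
  · exact ⟨0, by simp, (zero_smul 𝕜 b).symm⟩
  have hcol (x : A) (hx : LinearMap.mulLeftRight 𝕜 (a, e) x ≠ 0) : ∃ c : 𝕜, 1 ≤ ‖c‖ ∧
      LinearMap.mulLeftRight 𝕜 (b, e) x = c • LinearMap.mulLeftRight 𝕜 (a, e) x := by
    simp only [LinearMap.mulLeftRight_apply, mul_assoc] at hx ⊢
    exact he.exists_mul_eq_smul_mul hab (by rw [mul_assoc, he.isIdempotentElem.eq]) hx
  have hae : LinearMap.mulLeftRight 𝕜 (a, e) ≠ 0 := fun h => ha (faithful h)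
  obtain ⟨c, hbe⟩ := exists_eq_smul_of_forall_exists_eq_smul hae fun x hx =>
    have ⟨c, hc, hbx⟩ := hcol x hx
    ⟨c, norm_pos_iff.1 (one_pos.trans_le hc), hbx⟩
  have hc : 1 ≤ ‖c‖ := by
    obtain ⟨x, hx⟩ := DFunLike.ne_iff.1 hae
    obtain ⟨c', hc', hbx⟩ := hcol x hx
    rw [hbe, LinearMap.smul_apply] at hbx
    rwa [smul_left_injective 𝕜 hx hbx]
  have hb : b = c • a := sub_eq_zero.1 <| faithful <| LinearMap.ext fun x => by
    have hbx := LinearMap.congr_fun hbe x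
    simp only [LinearMap.smul_apply, LinearMap.mulLeftRight_apply] at hbx
    rw [LinearMap.mulLeftRight_apply, sub_mul, sub_mul, smul_mul_assoc, smul_mul_assoc, hbx,
      sub_self, LinearMap.zero_apply]
  refine ⟨c⁻¹, by rw [norm_inv]; exact inv_le_one_of_one_le₀ hc, ?_⟩
  rw [hb, inv_smul_smul₀ (norm_pos_iff.1 (one_pos.trans_le hc))]

end IsMinimalIdempotent

theorem JacobsonSemisimple.isPrimeAlgebra (hA : JacobsonSemisimple A)
    (h : ∀ a b : A, (∀ x, spectralRadius 𝕜 (a * x) ≤ spectralRadius 𝕜 (b * x)) →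
      ∃ c : 𝕜, a = c • b) : IsPrimeAlgebra A := by
  refine isPrimeAlgebra_iff.2 fun a b hab => ?_
  have hba (x : A) : b * x * a = 0 := hA.eq_zero_of_forall_mul_mul_self fun y => by
    calc
      b * x * a * y * (b * x * a) = b * x * (a * y * b) * (x * a) := by simp only [mul_assoc]
      _ = 0 := by rw [hab, mul_zero, zero_mul]
  obtain ⟨c, hc⟩ := h a (a + b) fun x => by
    rw [add_mul]
    exact spectralRadius_le_spectralRadius_add (by rw [← mul_assoc, hab, zero_mul])
      (by rw [← mul_assoc, hba, zero_mul])
  obtain rfl | hc1 := eq_or_ne c 1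
  · right
    rwa [one_smul, left_eq_add] at hc
  · left
    refine hA.eq_zero_of_forall_mul_mul_self fun y => ?_
    have haya : a * y * a = c • (a * y * a) := by
      nth_rw 1 [hc]
      rw [smul_mul_assoc, smul_mul_assoc, add_mul, add_mul, hba, add_zero]
    refine (smul_eq_zero.1 (?_ : (1 - c) • (a * y * a) = 0)).resolve_left (sub_ne_zero.2 hc1.symm)
    rw [sub_smul, one_smul, ← haya, sub_self]

end SpectralRadius

section Socle

variable {A : Type*} [Ring A] [Algebra ℂ A]

lemma zero_mem_socle : (0 : A) ∈ socle A := by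
  have hempty : nzSpec (0 : A) = ∅ := by
    cases subsingleton_or_nontrivial A
    · rw [nzSpec, spectrum.of_subsingleton, Set.empty_sdiff]
    · rw [nzSpec, spectrum.zero_eq, Set.sdiff_self]
  simp [socle, srank, hempty]

theorem JacobsonSemisimple.exists_isAtom_of_mem_socle (hA : JacobsonSemisimple A) {a : A}
    (ha : a ∈ socle A) (ha0 : a ≠ 0) : ∃ I : Ideal A, IsAtom I ∧ I ≤ Ideal.span {a} := by
  by_contra! h
  obtain ⟨n, hn⟩ := ENat.ne_top_iff_exists.1 ha
  obtain ⟨M, hM, hsurj⟩ := hA.exists_isMaximal_forall_exists_sub_mem (n + 1)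
    (L := Ideal.span {a}) (by rwa [Ne, Ideal.span_singleton_eq_bot])
    fun I hI hatom => h I hatom hI
  let eigenvalue (i : Fin (n + 1)) : ℂ := (i : ℕ) + 1
  obtain ⟨w, hw, hwM⟩ := hsurj fun i => algebraMap ℂ A (eigenvalue i)
  obtain ⟨x, rfl⟩ := Ideal.mem_span_singleton'.1 hw
  have hrange : Set.range eigenvalue ⊆ nzSpec (x * a) := by
    rintro _ ⟨i, rfl⟩
    exact ⟨mem_spectrum_of_sub_mem (hM i).ne_top (hwM i), Nat.cast_add_one_ne_zero _⟩
  have hinj : Function.Injective eigenvalue := fun i j hij =>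
    Fin.ext (Nat.cast_injective (add_right_cancel hij))
  have hcard : ((n + 1 : ℕ) : ℕ∞) ≤ n := calc
    ((n + 1 : ℕ) : ℕ∞) ≤ (Set.range eigenvalue).encard := by simpa using hinj.encard_range
    _ ≤ (nzSpec (x * a)).encard := Set.encard_le_encard hrange
    _ ≤ srank a := le_iSup (fun x : A => (nzSpec (x * a)).encard) x
    _ = n := hn.symm
  exact absurd (Nat.cast_le.1 hcard) (by lia)

lemma JacobsonSemisimple.exists_isMinimalIdempotent_of_socle_ne_zero (hA : JacobsonSemisimple A)
    (hsoc : socle A ≠ {0}) : ∃ e : A, IsMinimalIdempotent e := by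
  obtain ⟨a, ha, ha0⟩ : ∃ a ∈ socle A, a ≠ 0 := by
    by_contra! h
    exact hsoc (Set.eq_singleton_iff_unique_mem.2 ⟨zero_mem_socle, h⟩)
  obtain ⟨I, hI, -⟩ := hA.exists_isAtom_of_mem_socle ha ha0
  exact hA.exists_isMinimalIdempotent hI

end Socle

theorem prime_iff_spectralRadius_domination_of_socle_ne_zero_general
    {A : Type*} [Ring A] [Algebra ℂ A] (hss : JacobsonSemisimple A) (hsoc : socle A ≠ {0}) :
    IsPrimeAlgebra A ↔
      ∀ a b : A,
        ((∀ x : A, spectralRadius ℂ (a * x) ≤ spectralRadius ℂ (b * x)) ↔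
          ∃ lam : ℂ, ‖lam‖ ≤ 1 ∧ a = lam • b) := by
  refine ⟨fun hA a b => ⟨fun hab => ?_, ?_⟩, fun h => ?_⟩
  · obtain ⟨e, he⟩ := hss.exists_isMinimalIdempotent_of_socle_ne_zero hsoc
    exact he.exists_eq_smul hA hab
  · rintro ⟨c, hc, rfl⟩ x
    rw [smul_mul_assoc]
    exact spectralRadius_smul_le hc (b * x)
  · refine hss.isPrimeAlgebra (𝕜 := ℂ) fun a b hab => ?_
    obtain ⟨c, -, hc⟩ := (h a b).1 hab
    exact ⟨c, hc⟩

theorem prime_iff_spectralRadius_domination_of_socle_ne_zero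
    {A : Type*} [NormedRing A] [NormOneClass A] [NormedAlgebra ℂ A] [CompleteSpace A]
    (hss : JacobsonSemisimple A) (hsoc : socle A ≠ {0}) :
    IsPrimeAlgebra A ↔
      ∀ a b : A,
        ((∀ x : A, spectralRadius ℂ (a * x) ≤ spectralRadius ℂ (b * x)) ↔
          ∃ lam : ℂ, ‖lam‖ ≤ 1 ∧ a = lam • b) :=
  prime_iff_spectralRadius_domination_of_socle_ne_zero_general hss hsoc
end
end

section
/- Let A be a complex semisimple unital Banach algebra, let N be a nonempty open subset of A, and let a, b ∈ A. If σ(ax) and σ(bx) are finite and equal for all x ∈ N, then a = b. -/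
open Complex

noncomputable section

/-!
By lower semicontinuity of the nonzero spectrum and Baire's theorem, `N` contains a point `x` near
which the number of nonzero spectral values of `x * a` is constant. By the maximum principle on
large discs, a description of `σ(u + ε • v)` by finitely many affine functions of `ε`, valid for
small `ε`, holds for all `ε`; together with semisimplicity this shows that `a` and `b` have the same
left annihilator, and that `a * P (x * a) = 0` for the polynomial `P` vanishing simply on the
nonzero spectral values of `x * a`.

Hence `a` is the sum of the elements `c = z * a`, where `z` is a Lagrange basis polynomial of a
spectral value `α`, evaluated at `a * x`. Perturbing `x` to `x + ε • y * z` moves `α` alone, namely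
to `α + ε * φ y`, where `φ` is the linear form with `c * y * c = φ y • c`. The piece `d = z * b`
satisfies `d * y * d = ψ y • d` for a linear form `ψ`, and the spectrum of `x * b + y * d`, which
moves in the same way, determines `ψ = φ`. Then `(c - d) * y * (c - d) = 0` for every `y`, so
`c = d` by semisimplicity, and summing over `α` gives `a = b`.
-/

open Filter Topology Polynomial

section JacobsonRadical

variable {R : Type*} [Ring R]

theorem JacobsonSemisimple.eq_zero_of_forall_isUnit_one_add_mul (hss : JacobsonSemisimple R)
    {r : R} (h : ∀ x, IsUnit (1 + x * r)) : r = 0 := by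
  have hr : r ∈ TwoSidedIdeal.jacobson (⊥ : TwoSidedIdeal R) := by
    refine TwoSidedIdeal.mem_jacobson_iff.2 fun x => ?_
    obtain ⟨z, hz⟩ := (h x).exists_left_inv
    refine ⟨z, ?_⟩
    rw [TwoSidedIdeal.mem_bot, ← sub_eq_zero.2 hz]
    noncomm_ring
  rwa [hss, TwoSidedIdeal.mem_bot] at hr

theorem JacobsonSemisimple.eq_zero_of_forall_mul_mul_self_eq_zero (hss : JacobsonSemisimple R)
    {r : R} (h : ∀ x, r * x * r = 0) : r = 0 := by
  refine hss.eq_zero_of_forall_isUnit_one_add_mul fun x =>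
    isUnit_iff_exists.2 ⟨1 - x * r, ?_, ?_⟩
  all_goals
    linear_combination (norm := noncomm_ring) -x * h x

end JacobsonRadical

section Spectrum

theorem subset_frontier_of_finite {X : Type*} [TopologicalSpace X] [T1Space X]
    [∀ x : X, (𝓝[≠] x).NeBot] {s : Set X} (hs : s.Finite) : s ⊆ frontier s := by
  rw [frontier_eq_closure_inter_closure, Set.compl_eq_univ_sdiff,
    (dense_univ.sdiff_finite hs).closure_eq, Set.inter_univ]
  exact subset_closure

theorem semiconjBy_aeval {R A : Type*} [CommSemiring R] [Semiring A] [Algebra R A] {c u v : A}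
    (h : SemiconjBy c u v) (p : R[X]) : SemiconjBy c (aeval u p) (aeval v p) := by
  induction p using Polynomial.induction_on' with
  | add p q hp hq => simpa only [map_add] using hp.add_right hq
  | monomial n r =>
    simpa only [aeval_monomial] using
      SemiconjBy.mul_right (Algebra.commutes r c).symm (h.pow_right n)

theorem mem_spectrum_of_mul_eq_smul {R A : Type*} [CommRing R] [Ring A] [Algebra R A] {t e : A}
    {k : R} (he : e ≠ 0) (h : t * e = k • e) : k ∈ spectrum R t := by
  refine spectrum.mem_iff.2 fun hu => he (hu.mul_right_eq_zero.1 ?_)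
  rw [sub_mul, h, Algebra.smul_def, sub_self]

variable {𝕜 A : Type*} [NormedField 𝕜] [NormedRing A] [NormedAlgebra 𝕜 A] [CompleteSpace A]

theorem not_isUnit_mul_sub_algebraMap_of_mem_frontier {t : A} {k : 𝕜}
    (hk : k ∈ frontier (spectrum 𝕜 t)) (d : A) : ¬IsUnit (d * (t - algebraMap 𝕜 A k)) := by
  intro hd
  rw [frontier_eq_closure_inter_closure] at hk
  have hcont : Continuous fun l => d * (t - algebraMap 𝕜 A l) :=
    continuous_const.mul (continuous_const.sub (continuous_algebraMap 𝕜 A))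
  have hnear : ∀ᶠ l in 𝓝 k, IsUnit (d * (t - algebraMap 𝕜 A l)) :=
    hcont.continuousAt.eventually (Units.isOpen.mem_nhds hd)
  obtain ⟨l, hl, hdl⟩ := ((mem_closure_iff_frequently.1 hk.2).and_eventually hnear).exists
  have hl' : IsUnit (t - algebraMap 𝕜 A l) := by
    simpa only [neg_sub] using (spectrum.notMem_iff.1 hl).neg
  have hdunit : IsUnit d := (IsUnit.mul_right_iff hl').1 hdl
  have hmem : k ∈ spectrum 𝕜 t := (spectrum.isClosed (𝕜 := 𝕜) t).closure_eq ▸ hk.1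
  refine spectrum.mem_iff.1 hmem ?_
  simpa only [neg_sub] using ((IsUnit.mul_left_iff hdunit).1 hd).neg

theorem mem_spectrum_add_mul_aeval {t : A} {k : 𝕜} (hk : k ∈ frontier (spectrum 𝕜 t)) {p : 𝕜[X]}
    (hp : p.IsRoot k) (w : A) : k ∈ spectrum 𝕜 (t + w * aeval t p) := by
  obtain ⟨q, rfl⟩ := dvd_iff_isRoot.2 hp
  have hfactor : t + w * aeval t ((X - C k) * q) - algebraMap 𝕜 A k =
      (1 + w * aeval t q) * (t - algebraMap 𝕜 A k) := by
    rw [mul_comm, map_mul, map_sub, aeval_X, aeval_C]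
    noncomm_ring
  rw [spectrum.mem_iff, ← IsUnit.neg_iff, neg_sub, hfactor]
  exact not_isUnit_mul_sub_algebraMap_of_mem_frontier hk _

end Spectrum

section MaximumPrinciple

variable {A : Type*} [NormedRing A] [NormedAlgebra ℂ A]

theorem diffContOnCl_aeval_prod_X_sub_C {ι : Type*} {F : ℂ → A} {f : ι → ℂ → ℂ} {U : Set ℂ}
    (s : Finset ι) (hF : DiffContOnCl ℂ F U) (hf : ∀ i ∈ s, DiffContOnCl ℂ (f i) U) :
    DiffContOnCl ℂ (fun z => aeval (F z) (∏ i ∈ s, (X - C (f i z)))) U := by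
  classical
  induction s using Finset.induction_on with
  | empty => simpa using diffContOnCl_const
  | insert i s hi ih =>
    have hfactor : DiffContOnCl ℂ (fun z => F z - algebraMap ℂ A (f i z)) U := by
      simp only [Algebra.algebraMap_eq_smul_one]
      exact hF.sub ((hf i (Finset.mem_insert_self i s)).smul diffContOnCl_const)
    have hrest := ih fun j hj => hf j (Finset.mem_insert_of_mem hj)
    simp only [Finset.prod_insert hi, map_mul, map_sub, aeval_X, aeval_C]
    exact ⟨hfactor.1.mul hrest.1, hfactor.2.mul hrest.2⟩

variable [CompleteSpace A]

theorem eventually_norm_pow_lt_of_spectrum_subset {c : A} (hc : spectrum ℂ c ⊆ {0}) {δ : ℝ}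
    (hδ : 0 < δ) : ∀ᶠ n : ℕ in atTop, ‖c ^ n‖ < δ ^ n := by
  have hradius : spectralRadius ℂ c = 0 := by
    simp only [spectralRadius, ENNReal.iSup_eq_zero, ENNReal.coe_eq_zero, nnnorm_eq_zero]
    exact fun k hk => hc hk
  have hGelfand := spectrum.pow_norm_pow_one_div_tendsto_nhds_spectralRadius c
  rw [hradius] at hGelfand
  filter_upwards [hGelfand.eventually (gt_mem_nhds (ENNReal.ofReal_pos.2 hδ)),
    eventually_ne_atTop 0] with n hn hn0
  rw [ENNReal.ofReal_lt_ofReal_iff hδ, one_div] at hn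
  have := pow_lt_pow_left₀ hn (by positivity) hn0
  rwa [Real.rpow_inv_natCast_pow (norm_nonneg _) hn0] at this

/- The sets `{w | ‖F w ^ 2 ^ k‖ < δ ^ 2 ^ k}` increase with `k`, so compactness makes a single
exponent work on the whole frontier. -/
theorem exists_forall_norm_pow_lt_of_spectrum_subset {F : ℂ → A} {K : Set ℂ} (hK : IsCompact K)
    (hF : ContinuousOn F K) (hs : ∀ z ∈ K, spectrum ℂ (F z) ⊆ {0}) {δ : ℝ} (hδ : 0 < δ) :
    ∃ n ≠ 0, ∀ z ∈ K, ‖F z ^ n‖ < δ ^ n := by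
  have hmono (c : A) : Monotone fun k => ‖c ^ 2 ^ k‖ < δ ^ 2 ^ k := by
    refine monotone_nat_of_le_succ fun k hk => ?_
    rw [pow_succ, pow_mul, pow_mul]
    calc ‖(c ^ 2 ^ k) ^ 2‖ ≤ ‖c ^ 2 ^ k‖ ^ 2 := norm_pow_le' _ two_pos
      _ < (δ ^ 2 ^ k) ^ 2 := by gcongr
  suffices ∃ k, ∀ z ∈ K, ‖F z ^ 2 ^ k‖ < δ ^ 2 ^ k from
    this.imp' (2 ^ ·) fun k hk => ⟨by positivity, hk⟩
  refine hK.induction_on (p := fun s => ∃ k, ∀ z ∈ s, ‖F z ^ 2 ^ k‖ < δ ^ 2 ^ k) (by simp)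
    (fun s t hst => Exists.imp fun k hk z hz => hk z (hst hz)) ?_ fun z hz => ?_
  · rintro s t ⟨k, hk⟩ ⟨l, hl⟩
    refine ⟨max k l, fun z hz => hz.elim (fun h => ?_) fun h => ?_⟩
    · exact hmono _ (le_max_left k l) (hk z h)
    · exact hmono _ (le_max_right k l) (hl z h)
  · have hpow := (eventually_norm_pow_lt_of_spectrum_subset (hs z hz) hδ)
    obtain ⟨k, hk⟩ := ((tendsto_pow_atTop_atTop_of_one_lt one_lt_two).eventually hpow).exists
    have hcont : ContinuousWithinAt (fun w => ‖F w ^ 2 ^ k‖) K z := ((hF z hz).pow _).norm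
    exact ⟨_, hcont.eventually (gt_mem_nhds hk), k, fun w hw => hw⟩

theorem spectrum_subset_zero_of_forall_mem_frontier {F : ℂ → A} {U : Set ℂ}
    (hU : Bornology.IsBounded U) (hF : DiffContOnCl ℂ F U)
    (hs : ∀ z ∈ frontier U, spectrum ℂ (F z) ⊆ {0}) {z : ℂ} (hz : z ∈ closure U) :
    spectrum ℂ (F z) ⊆ {0} := by
  rcases subsingleton_or_nontrivial A with _ | _
  · simp only [spectrum.of_subsingleton, Set.empty_subset]
  have hone : 1 ≤ ‖(1 : A)‖ := one_le_norm_one A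
  intro q hq
  suffices hle : ∀ δ > 0, ‖q‖ ≤ δ * ‖(1 : A)‖ by
    by_contra hne
    have hq0 : 0 < ‖q‖ := norm_pos_iff.2 hne
    have := hle (‖q‖ / (2 * ‖(1 : A)‖)) (by positivity)
    field_simp at this
    linarith
  intro δ hδ
  obtain ⟨n, hn, hlt⟩ := exists_forall_norm_pow_lt_of_spectrum_subset
    (hU.isCompact_closure.of_isClosed_subset isClosed_frontier frontier_subset_closure)
    (hF.2.mono frontier_subset_closure) hs hδ
  have hinside : ‖F z ^ n‖ ≤ δ ^ n :=
    norm_le_of_forall_mem_frontier_norm_le hU ⟨hF.1.pow n, hF.2.pow n⟩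
      (fun w hw => (hlt w hw).le) hz
  refine le_of_pow_le_pow_left₀ hn (by positivity) ?_
  calc ‖q‖ ^ n = ‖q ^ n‖ := (norm_pow q n).symm
    _ ≤ ‖F z ^ n‖ * ‖(1 : A)‖ :=
      spectrum.norm_le_norm_mul_of_mem (spectrum.pow_mem_pow (F z) n hq)
    _ ≤ δ ^ n * ‖(1 : A)‖ ^ n := by
      gcongr
      exact le_self_pow₀ hone hn
    _ = (δ * ‖(1 : A)‖) ^ n := (mul_pow _ _ n).symm

/- Apply the quasinilpotent case to `∏ i ∈ s, (F z - f i z)`. -/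
theorem spectrum_subset_image_of_forall_mem_frontier {ι : Type*} {F : ℂ → A} {f : ι → ℂ → ℂ}
    {U : Set ℂ} (hU : Bornology.IsBounded U) (hF : DiffContOnCl ℂ F U) {s : Finset ι}
    (hf : ∀ i ∈ s, DiffContOnCl ℂ (f i) U)
    (hs : ∀ z ∈ frontier U, spectrum ℂ (F z) ⊆ (f · z) '' s) {z : ℂ} (hz : z ∈ closure U) :
    spectrum ℂ (F z) ⊆ (f · z) '' s := by
  rcases subsingleton_or_nontrivial A with _ | _
  · simp only [spectrum.of_subsingleton, Set.empty_subset]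
  have heval (k w : ℂ) : eval k (∏ i ∈ s, (X - C (f i w))) = 0 ↔ k ∈ (f · w) '' s := by
    simp only [eval_prod, eval_sub, eval_X, eval_C, Finset.prod_eq_zero_iff, sub_eq_zero,
      Set.mem_image, Finset.mem_coe, eq_comm (a := k)]
  intro k hk
  refine (heval k z).1 (spectrum_subset_zero_of_forall_mem_frontier hU
    (diffContOnCl_aeval_prod_X_sub_C s hF hf) (fun w hw => ?_) hz
    (spectrum.subset_polynomial_aeval _ _ ⟨k, hk, rfl⟩))
  rw [spectrum.map_polynomial_aeval]
  rintro _ ⟨l, hl, rfl⟩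
  exact (heval l w).2 (hs w hw hl)

open Pointwise in
theorem spectrum_smul_add_subset_iff {𝕜 A : Type*} [Field 𝕜] [Ring A] [Algebra 𝕜 A] {u v : A}
    {P : Set (𝕜 × 𝕜)} {ε : 𝕜} (hε : ε ≠ 0) :
    spectrum 𝕜 (ε⁻¹ • u + v) ⊆ (fun p => ε⁻¹ * p.1 + p.2) '' P ↔
      spectrum 𝕜 (u + ε • v) ⊆ (fun p => p.1 + ε * p.2) '' P := by
  have hspec : spectrum 𝕜 (u + ε • v) = ε • spectrum 𝕜 (ε⁻¹ • u + v) := by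
    have := spectrum.unit_smul_eq_smul (ε⁻¹ • u + v) (Units.mk0 ε hε)
    rw [Units.smul_mk0, smul_add, smul_inv_smul₀ hε] at this
    exact this
  have himage : (fun p => p.1 + ε * p.2) '' P = ε • (fun p => ε⁻¹ * p.1 + p.2) '' P := by
    rw [← Set.image_smul, Set.image_image]
    refine Set.image_congr fun p _ => ?_
    rw [smul_eq_mul, mul_add, mul_inv_cancel_left₀ hε]
  rw [hspec, himage, Set.smul_set_subset_smul_set_iff₀ hε]

/- In the variable `ε⁻¹` the line becomes `μ ↦ μ • u + v`, and a neighbourhood of `ε = 0` becomes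
one of infinity: the maximum principle on large discs does the rest. -/
theorem spectrum_add_smul_subset_of_eventually {u v : A} {P : Set (ℂ × ℂ)} (hP : P.Finite)
    (h : ∀ᶠ ε in 𝓝 (0 : ℂ), spectrum ℂ (u + ε • v) ⊆ (fun p => p.1 + ε * p.2) '' P) (ε : ℂ) :
    spectrum ℂ (u + ε • v) ⊆ (fun p => p.1 + ε * p.2) '' P := by
  rcases eq_or_ne ε 0 with rfl | hε
  · exact h.self_of_nhds
  obtain ⟨r, hr, hball⟩ := Metric.eventually_nhds_iff.1 h
  obtain ⟨R, hR⟩ := exists_gt (max r⁻¹ ‖ε⁻¹‖)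
  have hR0 : 0 < R := (inv_pos.2 hr).trans ((le_max_left _ _).trans_lt hR)
  lift P to Finset (ℂ × ℂ) using hP
  refine (spectrum_smul_add_subset_iff hε).1
    (spectrum_subset_image_of_forall_mem_frontier (F := fun μ => μ • u + v)
      (f := fun (p : ℂ × ℂ) μ => μ * p.1 + p.2) (Metric.isBounded_ball (x := 0) (r := R))
      (Differentiable.diffContOnCl (by fun_prop))
      (fun p _ => Differentiable.diffContOnCl (by fun_prop)) (fun μ hμ => ?_)
      (subset_closure (mem_ball_zero_iff.2 ((le_max_right _ _).trans_lt hR))))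
  rw [frontier_ball _ hR0.ne', mem_sphere_zero_iff_norm] at hμ
  have hμ0 : μ ≠ 0 := norm_pos_iff.1 (hμ ▸ hR0)
  have := (spectrum_smul_add_subset_iff (inv_ne_zero hμ0)).2 (hball (y := μ⁻¹) ?_)
  · rwa [inv_inv] at this
  · rw [dist_zero_right, norm_inv, hμ]
    exact inv_lt_of_inv_lt₀ hr ((le_max_left _ _).trans_lt hR)

theorem JacobsonSemisimple.eq_zero_of_forall_eventually_spectrum_subset
    (hss : JacobsonSemisimple A) {u r : A} {S : Set ℂ} (hS : S.Finite)
    (h : ∀ x, ∀ᶠ ε in 𝓝 (0 : ℂ), spectrum ℂ (u + ε • (x * r)) ⊆ S) : r = 0 := by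
  have hline (x : A) : spectrum ℂ (u + x * r) ⊆ S := by
    have himage (ε : ℂ) : (fun p : ℂ × ℂ => p.1 + ε * p.2) '' S ×ˢ {0} = S := by
      simp [Set.prod_singleton, Set.image_image]
    have := spectrum_add_smul_subset_of_eventually (hS.prod (Set.finite_singleton 0))
      (by simpa only [himage] using h x) 1
    rwa [himage, one_smul] at this
  obtain ⟨γ, hγ⟩ := hS.exists_notMem
  have hunit (x : A) : IsUnit (algebraMap ℂ A γ - (u + x * r)) :=
    spectrum.notMem_iff.1 fun hx => hγ (hline x hx)
  have hw : IsUnit (algebraMap ℂ A γ - u) := by simpa using hunit 0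
  refine hss.eq_zero_of_forall_isUnit_one_add_mul fun x => hw.mul_left_iff.1 ?_
  convert hunit (-((algebraMap ℂ A γ - u) * x)) using 1
  noncomm_ring

end MaximumPrinciple

section Resolvent

variable {𝕜 A : Type*} [NormedField 𝕜] [NormedRing A] [NormedAlgebra 𝕜 A] [CompleteSpace A]

theorem mem_resolventSet_of_norm_resolvent_mul_norm_sub_lt_one {c c' : A} {k : 𝕜}
    (hk : k ∈ resolventSet 𝕜 c') (h : ‖resolvent c' k‖ * ‖c - c'‖ < 1) : k ∈ resolventSet 𝕜 c := by
  have hfactor : algebraMap 𝕜 A k - c =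
      (algebraMap 𝕜 A k - c') * (1 - resolvent c' k * (c - c')) := by
    rw [mul_sub, ← mul_assoc, resolvent, Ring.mul_inverse_cancel _ hk]
    noncomm_ring
  rw [spectrum.mem_resolventSet_iff, hfactor]
  exact hk.mul (isUnit_one_sub_of_norm_lt_one ((norm_mul_le _ _).trans_lt h))

theorem isOpen_setOf_mem_resolventSet : IsOpen {p : A × 𝕜 | p.2 ∈ resolventSet 𝕜 p.1} :=
  Units.isOpen.preimage (((continuous_algebraMap 𝕜 A).comp continuous_snd).sub continuous_fst)

theorem continuousAt_uncurry_resolvent {c : A} {k : 𝕜} (hk : k ∈ resolventSet 𝕜 c) :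
    ContinuousAt (fun p : A × 𝕜 => resolvent p.1 p.2) (c, k) := by
  obtain ⟨w, hw⟩ := hk
  have hsub : Continuous fun p : A × 𝕜 => algebraMap 𝕜 A p.2 - p.1 :=
    ((continuous_algebraMap 𝕜 A).comp continuous_snd).sub continuous_fst
  exact ContinuousAt.comp (g := Ring.inverse) (hw ▸ NormedRing.inverse_continuousAt w)
    hsub.continuousAt

theorem exists_eventually_forall_norm_resolvent_lt {c : A} {K : Set 𝕜} (hK : IsCompact K)
    (hc : K ⊆ resolventSet 𝕜 c) :
    ∃ M : ℝ, ∀ᶠ c' in 𝓝 c, ∀ k ∈ K, k ∈ resolventSet 𝕜 c' ∧ ‖resolvent c' k‖ < M := by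
  obtain ⟨M, hM⟩ := hK.exists_bound_of_continuousOn (f := resolvent c) fun k hk =>
    ((continuousAt_uncurry_resolvent (hc hk)).comp
      (continuousAt_const.prodMk continuousAt_id)).continuousWithinAt
  refine ⟨M + 1, hK.eventually_forall_of_forall_eventually fun k hk => ?_⟩
  exact (isOpen_setOf_mem_resolventSet.eventually_mem (x := (c, k)) (hc hk)).and
    ((continuousAt_uncurry_resolvent (hc hk)).norm.eventually
      (gt_mem_nhds (lt_add_of_le_of_pos (hM k hk) one_pos)))

end Resolvent

section LowerSemicontinuity

variable {A : Type*} [NormedRing A] [NormedAlgebra ℂ A] [CompleteSpace A]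

/- If the spectrum of `c'` avoided the ball, the resolvent of `c'` at the centre would be bounded by
its maximum on the sphere, uniformly for `c'` near `c`, and the centre would be regular for `c`. -/
theorem eventually_spectrum_inter_nonempty {c : A} {k : ℂ} (hk : k ∈ spectrum ℂ c) {U : Set ℂ}
    (hU : U ∈ 𝓝 k) (hcU : spectrum ℂ c ∩ U ⊆ {k}) :
    ∀ᶠ c' in 𝓝 c, (spectrum ℂ c' ∩ U).Nonempty := by
  obtain ⟨r, hr, hrU⟩ := Metric.nhds_basis_closedBall.mem_iff.1 hU
  have hsphere : Metric.sphere k r ⊆ resolventSet ℂ c := fun l hl => by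
    by_contra hmem
    have hlk : l = k := hcU ⟨hmem, hrU (Metric.sphere_subset_closedBall hl)⟩
    exact Metric.ne_of_mem_sphere hl hr.ne' hlk
  obtain ⟨M, hM⟩ := exists_eventually_forall_norm_resolvent_lt (isCompact_sphere k r) hsphere
  have hnear : ∀ᶠ c' in 𝓝 c, M * ‖c - c'‖ < 1 :=
    Continuous.tendsto' (by fun_prop) c 0 (by simp) |>.eventually_lt_const one_pos
  filter_upwards [hM, hnear] with c' hbound hlt
  by_contra hempty
  have hball : Metric.closedBall k r ⊆ resolventSet ℂ c' := fun l hl => by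
    by_contra hmem
    exact hempty ⟨l, hmem, hrU hl⟩
  have hcenter : ‖resolvent c' k‖ ≤ M := by
    refine norm_le_of_forall_mem_frontier_norm_le Metric.isBounded_ball
      (DifferentiableOn.diffContOnCl_ball (fun l hl => ?_) hball) (fun l hl => ?_)
      (subset_closure (Metric.mem_ball_self hr))
    · exact (spectrum.hasDerivAt_resolvent_const_left hl).differentiableAt.differentiableWithinAt
    · rw [frontier_ball k hr.ne'] at hl
      exact (hbound l hl).2.le
  exact hk (mem_resolventSet_of_norm_resolvent_mul_norm_sub_lt_one
    (hball (Metric.mem_closedBall_self hr.le)) ((by gcongr : _ ≤ _).trans_lt hlt))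

theorem lowerSemicontinuousAt_encard_nzSpec {c : A} (hc : (nzSpec c).Finite) :
    LowerSemicontinuousAt (fun c' => (nzSpec c').encard) c := by
  have hfin : (insert 0 (spectrum ℂ c)).Finite := by
    rw [← Set.insert_sdiff_singleton]
    exact hc.insert 0
  obtain ⟨U, hU, hdisj⟩ := hfin.t2_separation
  have hisolated {k : ℂ} (hk : k ∈ insert 0 (spectrum ℂ c)) {l : ℂ}
      (hl : l ∈ insert 0 (spectrum ℂ c)) (hlU : l ∈ U k) : l = k :=
    hdisj.elim_set hl hk l (hU l).1 hlU
  have hmeet : ∀ᶠ c' in 𝓝 c, ∀ k ∈ nzSpec c, (spectrum ℂ c' ∩ U k).Nonempty := by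
    refine (eventually_all_finite hc).2 fun k hk =>
      eventually_spectrum_inter_nonempty hk.1 ((hU k).2.mem_nhds (hU k).1) ?_
    exact fun l hl => hisolated (Or.inr hk.1) (Or.inr hl.1) hl.2
  intro n hn
  filter_upwards [hmeet] with c' hc'
  refine hn.trans_le ?_
  choose! f hf using hc'
  refine Set.encard_le_encard_of_injOn (f := f) (fun k hk => ⟨(hf k hk).1, fun h0 => ?_⟩) ?_
  · have h0U : (0 : ℂ) ∈ U k := Set.mem_singleton_iff.1 h0 ▸ (hf k hk).2
    exact hk.2 (hisolated (Or.inr hk.1) (Or.inl rfl) h0U).symm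
  · intro k hk l hl hkl
    exact hdisj.elim_set (Or.inr hk.1) (Or.inr hl.1) _ (hf k hk).2 (hkl ▸ (hf l hl).2)

theorem exists_eventually_eq_of_forall_lowerSemicontinuousAt {X : Type*} [TopologicalSpace X]
    [BaireSpace X] {f : X → ℕ∞} {N : Set X} (hN : IsOpen N) (hNne : N.Nonempty)
    (hf : ∀ x ∈ N, LowerSemicontinuousAt f x) (hfin : ∀ x ∈ N, f x ≠ ⊤) :
    ∃ x ∈ N, ∀ᶠ y in 𝓝 x, f y = f x := by
  have hopen (n : ℕ) : IsOpen {x ∈ N | n < f x} := isOpen_iff_mem_nhds.2 fun x hx =>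
    inter_mem (hN.mem_nhds hx.1) (hf x hx.1 n hx.2)
  have hcover : ⋃ n : ℕ, {x ∈ N | n < f x}ᶜ = Set.univ := by
    refine Set.eq_univ_of_forall fun x => Set.mem_iUnion.2 ?_
    by_cases hx : x ∈ N
    · obtain ⟨n, hn⟩ := ENat.ne_top_iff_exists.1 (hfin x hx)
      exact ⟨n, fun h => h.2.ne hn⟩
    · exact ⟨0, fun h => hx h.1⟩
  obtain ⟨y, hy, hyN⟩ :=
    (dense_iUnion_interior_of_closed (fun n => (hopen n).isClosed_compl) hcover).exists_mem_open
      hN hNne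
  obtain ⟨n, hyn⟩ := Set.mem_iUnion.1 hy
  set V : Set X := N ∩ interior {x ∈ N | n < f x}ᶜ
  have hle : ∀ x ∈ V, f x ≤ n := fun x hx => not_lt.1 fun h => interior_subset hx.2 ⟨hx.1, h⟩
  have himage : (f '' V).Finite := ENat.finite_of_sSup_lt_top
    ((sSup_le (Set.forall_mem_image.2 hle)).trans_lt (ENat.natCast_lt_top n))
  obtain ⟨x, hxV, hmax⟩ := Set.Finite.exists_maximalFor' f V himage ⟨y, hyN, hyn⟩
  refine ⟨x, hxV.1, ?_⟩
  have hge : ∀ᶠ w in 𝓝 x, f x ≤ f w := by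
    obtain ⟨m, hm⟩ := ENat.ne_top_iff_exists.1 (hfin x hxV.1)
    rcases m with _ | m
    · simp [← hm]
    · have hlt : (m : ℕ∞) < f x := hm ▸ Nat.cast_lt.2 m.lt_succ_self
      filter_upwards [hf x hxV.1 m hlt] with w hw
      rw [← hm]
      exact_mod_cast Order.add_one_le_of_lt hw
  filter_upwards [(hN.inter isOpen_interior).mem_nhds hxV, hge] with w hwV hw
  exact (hmax hwV hw).antisymm hw

end LowerSemicontinuity

section RankOne

theorem exists_linearMap_of_forall_mul_mul_eq_smul {𝕜 A : Type*} [Field 𝕜] [Ring A] [Algebra 𝕜 A]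
    {c : A} (hc : c ≠ 0) (h : ∀ y, ∃ m : 𝕜, c * y * c = m • c) :
    ∃ φ : A →ₗ[𝕜] 𝕜, ∀ y, c * y * c = φ y • c := by
  choose φ hφ using h
  refine ⟨{ toFun := φ, map_add' := fun y z => ?_, map_smul' := fun k y => ?_ }, hφ⟩ <;>
    refine smul_left_injective 𝕜 hc ?_
  · simp only [add_smul, ← hφ, mul_add, add_mul]
  · simp only [RingHom.id_apply, smul_assoc, ← hφ, mul_smul_comm, smul_mul_assoc]

theorem JacobsonSemisimple.exists_eq_one_of_mul_mul_eq_smul {𝕜 A : Type*} [Field 𝕜] [Ring A]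
    [Algebra 𝕜 A] (hss : JacobsonSemisimple A) {c : A} (hc : c ≠ 0) {φ : A →ₗ[𝕜] 𝕜}
    (hφ : ∀ y, c * y * c = φ y • c) : ∃ y, φ y = 1 := by
  by_contra! h
  refine hc (hss.eq_zero_of_forall_mul_mul_self_eq_zero fun y => ?_)
  have hy : φ y = 0 := by
    by_contra hy
    exact h ((φ y)⁻¹ • y) (by rw [map_smul, smul_eq_mul, inv_mul_cancel₀ hy])
  rw [hφ, hy, zero_smul]

/- For `k ∉ s` and `ψ y ≠ 0`, the perturbation `w = (ψ y)⁻¹ • (k - u) * y` makes `y * d` an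
eigenvector of `u + w * d` for `k`, so that `k = α + φ w`. Two values of `k` determine `φ y`. -/
theorem linearMap_eq_of_forall_spectrum_add_mul_subset {𝕜 A : Type*} [Field 𝕜] [Infinite 𝕜] [Ring A]
    [Algebra 𝕜 A] {d u : A} {α : 𝕜} {s : Set 𝕜} {φ ψ : A →ₗ[𝕜] 𝕜} (hs : s.Finite) (hd : d ≠ 0)
    (hψ : ∀ y, d * y * d = ψ y • d) (hψ0 : ψ ≠ 0)
    (h : ∀ y, spectrum 𝕜 (u + y * d) ⊆ insert (α + φ y) s) : φ = ψ := by
  have hmove {y : A} (hy : ψ y ≠ 0) {k : 𝕜} (hk : k ∉ s) :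
      k = α + (ψ y)⁻¹ * (k * φ y - φ (u * y)) := by
    set w := (ψ y)⁻¹ • (k • y - u * y)
    have heig : (u + w * d) * (y * d) = k • (y * d) := by
      have hwdyd : w * d * (y * d) = k • (y * d) - u * (y * d) := by
        rw [mul_assoc, ← mul_assoc d, hψ, smul_mul_assoc, mul_smul_comm, inv_smul_smul₀ hy,
          sub_mul, smul_mul_assoc, mul_assoc]
      rw [add_mul, hwdyd, add_sub_cancel]
    have hyd : y * d ≠ 0 := fun h0 => smul_ne_zero hy hd (by rw [← hψ, mul_assoc, h0, mul_zero])
    have hmem := (h w (mem_spectrum_of_mul_eq_smul hyd heig)).resolve_right hk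
    simpa only [w, map_smul, map_sub, smul_eq_mul] using hmem
  have heq {y : A} (hy : ψ y ≠ 0) : φ y = ψ y := by
    obtain ⟨k, hk⟩ := hs.exists_notMem
    obtain ⟨l, hl⟩ := (hs.insert k).exists_notMem
    obtain ⟨hlk, hls⟩ := not_or.1 hl
    have hkey := congrArg₂ (· - ·) (hmove hy hk) (hmove hy hls)
    refine mul_left_cancel₀ (sub_ne_zero.2 (Ne.symm hlk)) ?_
    field_simp at hkey
    linear_combination -hkey
  obtain ⟨y₁, hy₁⟩ : ∃ y, ψ y ≠ 0 := by
    by_contra! h0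
    exact hψ0 (LinearMap.ext h0)
  ext y
  by_cases hy : ψ y = 0
  · have hsum := heq (y := y + y₁) (by rwa [map_add, hy, zero_add])
    rw [map_add, map_add, heq hy₁] at hsum
    exact add_right_cancel hsum
  · exact heq hy

theorem JacobsonSemisimple.eq_of_forall_mul_mul_eq_smul {𝕜 A : Type*} [Field 𝕜] [Ring A]
    [Algebra 𝕜 A] (hss : JacobsonSemisimple A) {c d : A} {φ : A → 𝕜}
    (hcc : ∀ y, c * y * c = φ y • c) (hcd : ∀ y, c * y * d = φ y • d)
    (hdc : ∀ y, d * y * c = φ y • c) (hdd : ∀ y, d * y * d = φ y • d) : c = d := by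
  refine sub_eq_zero.1 (hss.eq_zero_of_forall_mul_mul_self_eq_zero fun y => ?_)
  rw [sub_mul, mul_sub, sub_mul, sub_mul, hcc, hcd, hdc, hdd, sub_self, sub_self, sub_self]

theorem JacobsonSemisimple.eq_of_forall_spectrum_add_mul_subset {𝕜 A : Type*} [Field 𝕜]
    [Infinite 𝕜] [Ring A] [Algebra 𝕜 A] (hss : JacobsonSemisimple A) {c d u : A} {α : 𝕜}
    {s : Set 𝕜} {φ : A →ₗ[𝕜] 𝕜} (hs : s.Finite) (hc : c ≠ 0) (hd : d ≠ 0)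
    (hcc : ∀ y, c * y * c = φ y • c) (hcd : ∀ y, c * y * d = φ y • d)
    (h : ∀ y, spectrum 𝕜 (u + y * d) ⊆ insert (α + φ y) s) : c = d := by
  obtain ⟨y₀, hy₀⟩ := hss.exists_eq_one_of_mul_mul_eq_smul hc hcc
  have hdfac : d = c * (y₀ * d) := by rw [← mul_assoc, hcd, hy₀, one_smul]
  set ψ : A →ₗ[𝕜] 𝕜 := φ ∘ₗ LinearMap.mulLeft 𝕜 (y₀ * d)
  have hdc (y : A) : d * y * c = ψ y • c := by
    calc d * y * c = c * (y₀ * d * y) * c := by rw [← mul_assoc, ← hdfac]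
      _ = ψ y • c := hcc _
  have hdd (y : A) : d * y * d = ψ y • d := by
    calc d * y * d = c * (y₀ * d * y) * d := by rw [← mul_assoc, ← hdfac]
      _ = ψ y • d := hcd _
  have hψ0 : ψ ≠ 0 := by
    obtain ⟨y, hy⟩ := hss.exists_eq_one_of_mul_mul_eq_smul hd hdd
    exact fun h0 => one_ne_zero (α := 𝕜) (by rw [← hy, h0, LinearMap.zero_apply])
  have hφψ : φ = ψ := linearMap_eq_of_forall_spectrum_add_mul_subset hs hd hdd hψ0 h
  rw [← hφψ] at hdc hdd
  exact hss.eq_of_forall_mul_mul_eq_smul hcc hcd hdc hdd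

end RankOne

section RegularPoint

open Lagrange (nodal)

theorem tendsto_add_smul_nhds {𝕜 E : Type*} [Semiring 𝕜] [TopologicalSpace 𝕜] [AddCommMonoid E]
    [TopologicalSpace E] [ContinuousAdd E] [Module 𝕜 E] [ContinuousSMul 𝕜 E] (x y : E) :
    Tendsto (fun ε : 𝕜 => x + ε • y) (𝓝 0) (𝓝 x) :=
  Continuous.tendsto' (by fun_prop) 0 x (by simp)

theorem add_smul_mul_mul {R A : Type*} [CommSemiring R] [Semiring A] [Algebra R A] (x y z a : A)
    (ε : R) : (x + ε • (y * z)) * a = x * a + ε • (y * (z * a)) := by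
  rw [add_mul, smul_mul_assoc, mul_assoc]

theorem spectrum_subset_insert_zero_nzSpec {A : Type*} [Ring A] [Algebra ℂ A] (x : A) :
    spectrum ℂ x ⊆ insert 0 (nzSpec x) := by
  rw [nzSpec, Set.insert_sdiff_singleton]
  exact Set.subset_insert _ _

theorem eval_nodal_erase_ne_zero {R : Type*} [CommRing R] [IsDomain R] [DecidableEq R]
    (S : Finset R) (α : R) : eval α (nodal (S.erase α) id) ≠ 0 := by
  rw [Lagrange.eval_nodal]
  exact Finset.prod_ne_zero_iff.2 fun k hk => sub_ne_zero.2 (Finset.ne_of_mem_erase hk).symm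

variable {A : Type*} [NormedRing A] [NormedAlgebra ℂ A]

/-- `x` is a regular point of `a` if `x * a` has finitely many nonzero spectral values and their
number is locally constant at `x`. No maximality of the number over all of `A` is required. -/
def IsRegularPoint (a x : A) : Prop :=
  (nzSpec (x * a)).Finite ∧ ∀ᶠ y in 𝓝 x, (nzSpec (y * a)).encard = (nzSpec (x * a)).encard

theorem IsRegularPoint.eventually {a x : A} (hx : IsRegularPoint a x) :
    ∀ᶠ y in 𝓝 x, IsRegularPoint a y := by
  filter_upwards [eventually_eventually_nhds.2 hx.2] with y hy
  have hyx := hy.self_of_nhds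
  refine ⟨?_, by simpa only [hyx] using hy⟩
  rw [← Set.encard_lt_top_iff, hyx]
  exact hx.1.encard_lt_top

/-- The product of `a * x - k` over `k ∈ S \ {α}`: up to a scalar the Lagrange basis polynomial of
the node `α ∈ S`, evaluated at `a * x`. For `S = nzSpec (a * x)` it isolates the spectral value
`α`. -/
def nodalCofactor (S : Finset ℂ) (α : ℂ) (a x : A) : A :=
  aeval (a * x) (nodal (S.erase α) id)

theorem nodalCofactor_mul (S : Finset ℂ) (α : ℂ) (a x : A) :
    nodalCofactor S α a x * a = a * aeval (x * a) (nodal (S.erase α) id) :=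
  (semiconjBy_aeval (mul_assoc a x a).symm _).eq.symm

theorem nodalCofactor_mul_ne_zero {S : Finset ℂ} {a x : A} (hS : nzSpec (x * a) = S) {α : ℂ}
    (hα : α ∈ S) : nodalCofactor S α a x * a ≠ 0 := by
  intro h0
  have hα' : α ∈ nzSpec (x * a) := hS ▸ hα
  have hmem := spectrum.subset_polynomial_aeval (x * a) (X * nodal (S.erase α) id)
    ⟨α, hα'.1, rfl⟩
  rw [map_mul, aeval_X, mul_assoc, ← nodalCofactor_mul, h0, mul_zero, ← map_zero (algebraMap ℂ A),
    spectrum.mem_iff, ← map_sub, sub_zero] at hmem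
  refine hmem ((IsUnit.mk0 _ ?_).map (algebraMap ℂ A))
  simpa only [eval_mul, eval_X] using mul_ne_zero hα'.2 (eval_nodal_erase_ne_zero S α)

variable [CompleteSpace A]

theorem spectrum_add_subset_of_eventually_nzSpec_eq {u v : A} {α m : ℂ} {T : Finset ℂ}
    (h : ∀ᶠ ε in 𝓝 (0 : ℂ), nzSpec (u + ε • v) = (insert (α + ε * m) T : Finset ℂ)) :
    spectrum ℂ (u + v) ⊆ insert (α + m) (insert 0 ↑T) := by
  have himage (ε : ℂ) : (fun p : ℂ × ℂ => p.1 + ε * p.2) '' insert (α, m) (insert 0 ↑T ×ˢ {0}) =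
      insert (α + ε * m) (insert 0 ↑T) := by
    simp [Set.prod_singleton, Set.image_insert_eq, Set.image_image]
  have := spectrum_add_smul_subset_of_eventually (u := u) (v := v)
    (P := insert (α, m) (insert 0 ↑T ×ˢ {0}))
    (((T.finite_toSet.insert 0).prod (Set.finite_singleton 0)).insert _) (h.mono fun ε hε => ?_) 1
  · rwa [himage, one_smul, one_mul] at this
  · rw [himage, Set.insert_comm, ← Finset.coe_insert, ← hε]
    exact spectrum_subset_insert_zero_nzSpec _

theorem exists_isRegularPoint {a : A} {N : Set A} (hN : IsOpen N) (hNne : N.Nonempty)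
    (hfin : ∀ x ∈ N, (nzSpec (x * a)).Finite) : ∃ x ∈ N, IsRegularPoint a x := by
  obtain ⟨x, hxN, hx⟩ := exists_eventually_eq_of_forall_lowerSemicontinuousAt hN hNne
    (f := fun y => (nzSpec (y * a)).encard)
    (fun y hy =>
      (lowerSemicontinuousAt_encard_nzSpec (hfin y hy)).comp (g := (· * a)) (by fun_prop))
    fun y hy => (hfin y hy).encard_lt_top.ne
  exact ⟨x, hxN, hfin x hxN, hx⟩

theorem mem_nzSpec_add_mul_aeval {t : A} (ht : (nzSpec t).Finite) {k : ℂ} (hk : k ∈ nzSpec t)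
    {p : ℂ[X]} (hp : p.IsRoot k) (w : A) : k ∈ nzSpec (t + w * aeval t p) := by
  have hfin : (spectrum ℂ t).Finite := (ht.insert 0).subset (spectrum_subset_insert_zero_nzSpec t)
  exact ⟨mem_spectrum_add_mul_aeval (subset_frontier_of_finite hfin hk.1) hp w, hk.2⟩

theorem JacobsonSemisimple.mul_eq_zero_of_eventually_nzSpec_eq (hss : JacobsonSemisimple A)
    {a b x g : A} (hx : (nzSpec (x * a)).Finite)
    (hab : ∀ᶠ y in 𝓝 x, nzSpec (y * a) = nzSpec (y * b)) (hg : g * a = 0) : g * b = 0 := by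
  refine hss.eq_zero_of_forall_eventually_spectrum_subset (u := x * b) (hx.insert 0) fun y => ?_
  filter_upwards [(tendsto_add_smul_nhds x (y * g)).eventually hab] with ε hε
  rw [add_smul_mul_mul, add_smul_mul_mul, hg, mul_zero, smul_zero, add_zero] at hε
  rw [hε]
  exact spectrum_subset_insert_zero_nzSpec _

/- The perturbations `x * a + ε • y * (a * P (x * a))` keep every root of `P` as a spectral value,
and at a regular point there is no room for others. -/
theorem JacobsonSemisimple.mul_aeval_nodal_eq_zero (hss : JacobsonSemisimple A) {a x : A}
    (hx : IsRegularPoint a x) {S : Finset ℂ} (hS : nzSpec (x * a) = S) :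
    a * aeval (x * a) (nodal S id) = 0 := by
  have hsemi : a * aeval (x * a) (nodal S id) = aeval (a * x) (nodal S id) * a :=
    semiconjBy_aeval (mul_assoc a x a).symm _
  refine hss.eq_zero_of_forall_eventually_spectrum_subset (u := x * a) (hx.1.insert 0) fun y => ?_
  filter_upwards [(tendsto_add_smul_nhds x (y * aeval (a * x) (nodal S id))).eventually hx.2]
    with ε hε
  rw [add_smul_mul_mul, ← hsemi] at hε
  have hsub : nzSpec (x * a) ⊆ nzSpec (x * a + ε • (y * (a * aeval (x * a) (nodal S id)))) := by
    intro k hk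
    rw [← mul_assoc, ← smul_mul_assoc]
    have hroot : (nodal S id).IsRoot k :=
      Lagrange.eval_nodal_at_node (v := id) (Finset.mem_coe.1 (hS ▸ hk))
    exact mem_nzSpec_add_mul_aeval hx.1 hk hroot _
  rw [Set.Finite.eq_of_subset_of_encard_le hx.1 hsub hε.le]
  exact spectrum_subset_insert_zero_nzSpec _

theorem JacobsonSemisimple.nodalCofactor_mul_mul (hss : JacobsonSemisimple A) {S : Finset ℂ}
    {a x : A} (hx : IsRegularPoint a x) (hS : nzSpec (x * a) = S) {α : ℂ} (hα : α ∈ S) :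
    nodalCofactor S α a x * a * (x * a) = α • (nodalCofactor S α a x * a) := by
  have h := hss.mul_aeval_nodal_eq_zero hx hS
  rw [Lagrange.nodal_eq_mul_nodal_erase hα, mul_comm, map_mul, ← mul_assoc, ← nodalCofactor_mul,
    map_sub, aeval_X, aeval_C, mul_sub, ← Algebra.commutes, ← Algebra.smul_def] at h
  exact sub_eq_zero.1 h

theorem JacobsonSemisimple.mul_eq_smul_of_semiconjBy (hss : JacobsonSemisimple A) {a x z v : A}
    (hx : IsRegularPoint a x) {T : Finset ℂ} {μ : ℂ} (hμ : μ ∉ T)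
    (hT : nzSpec (x * a) = (insert μ T : Finset ℂ)) (hv : SemiconjBy (z * a) (x * a) v)
    (hunit : IsUnit (aeval v (nodal T id))) : v * (z * a) = μ • (z * a) := by
  have hnodal : nodal (insert μ T) id = nodal T id * (X - C μ) := by
    rw [Lagrange.nodal_insert_eq_nodal hμ, mul_comm, id]
  have hzero : aeval v (nodal (insert μ T) id) * (z * a) = 0 := by
    rw [← (semiconjBy_aeval hv _).eq, mul_assoc, hss.mul_aeval_nodal_eq_zero hx hT, mul_zero]
  rw [hnodal, map_mul, mul_assoc, hunit.mul_right_eq_zero, map_sub, aeval_X, aeval_C, sub_mul,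
    ← Algebra.smul_def] at hzero
  exact sub_eq_zero.1 hzero

theorem IsRegularPoint.eventually_nzSpec_eq_insert {S : Finset ℂ} {a x : A}
    (hx : IsRegularPoint a x) (hS : nzSpec (x * a) = S) {α : ℂ} (hα : α ∈ S) (y : A) :
    ∀ᶠ ε in 𝓝 (0 : ℂ), ∃ μ ∉ S.erase α,
      nzSpec ((x + ε • (y * nodalCofactor S α a x)) * a) = (insert μ (S.erase α) : Finset ℂ) := by
  have htend := tendsto_add_smul_nhds (𝕜 := ℂ) x (y * nodalCofactor S α a x)
  filter_upwards [htend.eventually hx.2, htend.eventually hx.eventually] with ε hcard hreg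
  lift nzSpec ((x + ε • (y * nodalCofactor S α a x)) * a) to Finset ℂ using hreg.1 with S' hS'
  have hsub : S.erase α ⊆ S' := fun k hk => by
    have hk' : k ∈ nzSpec (x * a) := hS ▸ Finset.mem_of_mem_erase hk
    rw [← Finset.mem_coe, hS', add_smul_mul_mul, nodalCofactor_mul, ← mul_assoc, ← smul_mul_assoc]
    exact mem_nzSpec_add_mul_aeval hx.1 hk' (Lagrange.eval_nodal_at_node (v := id) hk) _
  have hcard' : (S.erase α).card + 1 = S'.card := by
    rw [Finset.card_erase_add_one hα]
    simpa only [hS, Set.encard_coe_eq_coe_finsetCard, Nat.cast_inj, eq_comm] using hcard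
  obtain ⟨μ, hμ, h⟩ := Finset.exists_eq_insert_iff.2 ⟨hsub, hcard'⟩
  exact ⟨μ, hμ, by rw [h]⟩

/- `c = z * a` intertwines `x * a + ε • y * c` with `α + ε • c * y`, on whose range through `c` only
the moved spectral value survives: this forces `c * y * c` to be a multiple of `c`. -/
theorem JacobsonSemisimple.eventually_exists_smul_add_smul_eq_smul (hss : JacobsonSemisimple A)
    {S : Finset ℂ} {a x c : A} (hx : IsRegularPoint a x) (hS : nzSpec (x * a) = S) {α : ℂ}
    (hα : α ∈ S) (hc : c = nodalCofactor S α a x * a) (y : A) :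
    ∀ᶠ ε in 𝓝 (0 : ℂ), ∃ μ, α • c + ε • (c * y * c) = μ • c ∧
      nzSpec (x * a + ε • (y * c)) = (insert μ (S.erase α) : Finset ℂ) := by
  have hcont : Continuous fun ε : ℂ =>
      aeval (algebraMap ℂ A α + ε • (c * y)) (nodal (S.erase α) id) :=
    (Polynomial.continuous_aeval _).comp (by fun_prop)
  have hunit : ∀ᶠ ε in 𝓝 (0 : ℂ),
      IsUnit (aeval (algebraMap ℂ A α + ε • (c * y)) (nodal (S.erase α) id)) := by
    refine hcont.continuousAt.eventually (Units.isOpen.mem_nhds ?_)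
    simp only [zero_smul, add_zero, aeval_algebraMap_apply]
    exact (IsUnit.mk0 _ (eval_nodal_erase_ne_zero S α)).map (algebraMap ℂ A)
  filter_upwards [(tendsto_add_smul_nhds x (y * nodalCofactor S α a x)).eventually hx.eventually,
    hx.eventually_nzSpec_eq_insert hS hα y, hunit] with ε hreg ⟨μ, hμ, hspec⟩ hε
  have hpert : (x + ε • (y * nodalCofactor S α a x)) * a = x * a + ε • (y * c) := by
    rw [add_smul_mul_mul, hc]
  have hsemi : SemiconjBy c (x * a + ε • (y * c)) (algebraMap ℂ A α + ε • (c * y)) := by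
    rw [SemiconjBy, mul_add, add_mul, mul_smul_comm, smul_mul_assoc, mul_assoc c y c,
      ← Algebra.smul_def, hc, hss.nodalCofactor_mul_mul hx hS hα]
  have heig := hss.mul_eq_smul_of_semiconjBy (z := nodalCofactor S α a x) hreg hμ hspec
    (by rwa [hpert, ← hc]) hε
  rw [← hc, add_mul, ← Algebra.smul_def, smul_mul_assoc] at heig
  exact ⟨μ, heig, hpert ▸ hspec⟩

theorem JacobsonSemisimple.exists_linearMap_nodalCofactor (hss : JacobsonSemisimple A)
    {S : Finset ℂ} {a x c : A} (hx : IsRegularPoint a x) (hS : nzSpec (x * a) = S) {α : ℂ}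
    (hα : α ∈ S) (hc : c = nodalCofactor S α a x * a) :
    ∃ φ : A →ₗ[ℂ] ℂ, (∀ y, c * y * c = φ y • c) ∧ ∀ y, ∀ᶠ ε in 𝓝 (0 : ℂ),
      nzSpec (x * a + ε • (y * c)) = (insert (α + ε * φ y) (S.erase α) : Finset ℂ) := by
  have hc0 : c ≠ 0 := hc ▸ nodalCofactor_mul_ne_zero hS hα
  have hmove := hss.eventually_exists_smul_add_smul_eq_smul hx hS hα hc
  obtain ⟨φ, hφ⟩ := exists_linearMap_of_forall_mul_mul_eq_smul (𝕜 := ℂ) hc0 fun y => by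
    obtain ⟨ε, ⟨μ, hμ, -⟩, hε⟩ :=
      ((hmove y).filter_mono nhdsWithin_le_nhds |>.and self_mem_nhdsWithin).exists (f := 𝓝[≠] 0)
    refine ⟨ε⁻¹ * (μ - α), ?_⟩
    rw [mul_smul, sub_smul, ← hμ, add_sub_cancel_left, inv_smul_smul₀ hε]
  refine ⟨φ, hφ, fun y => (hmove y).mono fun ε ⟨μ, hμ, hspec⟩ => ?_⟩
  rw [hφ, smul_smul, ← add_smul] at hμ
  rw [smul_left_injective ℂ hc0 hμ, hspec]

theorem JacobsonSemisimple.nodalCofactor_mul_eq (hss : JacobsonSemisimple A) {S : Finset ℂ}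
    {a b x : A} (hx : IsRegularPoint a x) (hab : ∀ᶠ y in 𝓝 x, nzSpec (y * a) = nzSpec (y * b))
    (hS : nzSpec (x * a) = S) {α : ℂ} (hα : α ∈ S) :
    nodalCofactor S α a x * a = nodalCofactor S α a x * b := by
  set z := nodalCofactor S α a x
  obtain ⟨c, hc⟩ : ∃ c, c = z * a := ⟨_, rfl⟩
  obtain ⟨d, hd⟩ : ∃ d, d = z * b := ⟨_, rfl⟩
  obtain ⟨φ, hcc, hspec⟩ := hss.exists_linearMap_nodalCofactor hx hS hα hc
  have hc0 : c ≠ 0 := hc ▸ nodalCofactor_mul_ne_zero hS hα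
  have hd0 : d ≠ 0 := fun h0 => hc0 <| hc.trans <| hss.mul_eq_zero_of_eventually_nzSpec_eq
    (by rw [← hab.self_of_nhds]; exact hx.1) (hab.mono fun _ => Eq.symm) (hd ▸ h0)
  have hcd (y : A) : c * y * d = φ y • d := by
    have hann : (c * y * z - φ y • z) * a = 0 := by
      rw [sub_mul, mul_assoc, smul_mul_assoc, ← hc, hcc, sub_self]
    have := hss.mul_eq_zero_of_eventually_nzSpec_eq hx.1 hab hann
    rwa [sub_mul, mul_assoc, smul_mul_assoc, ← hd, sub_eq_zero] at this
  have hline (y : A) : spectrum ℂ (x * b + y * d) ⊆ insert (α + φ y) (insert 0 ↑(S.erase α)) := by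
    refine spectrum_add_subset_of_eventually_nzSpec_eq ?_
    filter_upwards [hspec y, (tendsto_add_smul_nhds x (y * z)).eventually hab] with ε hε habε
    rwa [add_smul_mul_mul, add_smul_mul_mul, ← hc, ← hd, hε, eq_comm] at habε
  rw [← hc, ← hd]
  exact hss.eq_of_forall_spectrum_add_mul_subset ((S.erase α).finite_toSet.insert 0) hc0 hd0 hcc hcd
    hline

theorem JacobsonSemisimple.eq_of_isRegularPoint (hss : JacobsonSemisimple A) {a b x : A}
    (hx : IsRegularPoint a x) (hab : ∀ᶠ y in 𝓝 x, nzSpec (y * a) = nzSpec (y * b)) : a = b := by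
  obtain ⟨S, hS⟩ := hx.1.exists_finset_coe
  rcases S.eq_empty_or_nonempty with rfl | hne
  · have ha : a = 0 := by simpa using hss.mul_aeval_nodal_eq_zero hx hS.symm
    have hb : 1 * b = 0 :=
      hss.mul_eq_zero_of_eventually_nzSpec_eq hx.1 hab (by rw [ha, mul_zero])
    rw [ha, ← one_mul b, hb]
  · have hpiece (α : ℂ) (hα : α ∈ S) :
        aeval (a * x) (Lagrange.basis S id α) * a = aeval (a * x) (Lagrange.basis S id α) * b := by
      rw [Lagrange.basis_eq_prod_sub_inv_mul_nodal_div hα, ← Lagrange.nodal_erase_eq_nodal_div hα,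
        map_mul, mul_assoc, mul_assoc]
      exact congrArg _ (hss.nodalCofactor_mul_eq hx hab hS.symm hα)
    have hsum : ∑ α ∈ S, aeval (a * x) (Lagrange.basis S id α) = 1 := by
      rw [← map_sum, Lagrange.sum_basis Function.injective_id.injOn hne, map_one]
    calc a = ∑ α ∈ S, aeval (a * x) (Lagrange.basis S id α) * a := by
          rw [← Finset.sum_mul, hsum, one_mul]
      _ = ∑ α ∈ S, aeval (a * x) (Lagrange.basis S id α) * b := Finset.sum_congr rfl hpiece
      _ = b := by rw [← Finset.sum_mul, hsum, one_mul]

end RegularPoint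

theorem eq_of_spectrum_finite_and_equal_on_open_general {A : Type*} [NormedRing A]
    [NormedAlgebra ℂ A] [CompleteSpace A] (hss : JacobsonSemisimple A) {N : Set A} (hN : IsOpen N)
    (hNne : N.Nonempty) {a b : A}
    (h : ∀ x ∈ N, (nzSpec (a * x)).Finite ∧ nzSpec (a * x) = nzSpec (b * x)) : a = b := by
  have hcomm (c x : A) : nzSpec (c * x) = nzSpec (x * c) := spectrum.nonzero_mul_comm c x
  obtain ⟨x, hxN, hx⟩ := exists_isRegularPoint (a := a) hN hNne fun x hx => hcomm a x ▸ (h x hx).1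
  refine hss.eq_of_isRegularPoint hx ?_
  filter_upwards [hN.mem_nhds hxN] with y hy
  rw [← hcomm a, ← hcomm b, (h y hy).2]

theorem eq_of_spectrum_finite_and_equal_on_open
    {A : Type*} [NormedRing A] [NormOneClass A] [NormedAlgebra ℂ A] [CompleteSpace A]
    (hss : JacobsonSemisimple A) (N : Set A) (hN : IsOpen N) (hNne : N.Nonempty)
    (a b : A)
    (h : ∀ x ∈ N, (spectrum ℂ (a * x)).Finite ∧ (spectrum ℂ (b * x)).Finite ∧
      spectrum ℂ (a * x) = spectrum ℂ (b * x)) :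
    a = b :=
  eq_of_spectrum_finite_and_equal_on_open_general hss hN hNne fun x hx =>
    ⟨(h x hx).1.sdiff, congrArg (· \ {0}) (h x hx).2.2⟩
end
end
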